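/- arXiv:solv-int/9903014 — 2 statements merged into one kernel-verified Lean document; each statement's English description precedes it below -/
import Mathlib

section
/- Let w be a smooth solution of P_XXXIV[α] on an open interval I ⊆ ℝ, and let ψ_0 be a nowhere-vanishing smooth function on I satisfying both (L1) and (L2) with this w and parameter α. Define the sequences ψ_n, φ_n and the Hankel determinants τ_N from w and ψ_0. Then for every integer N such that τ_N is nowhere zero on I, the function W = w + 2(τ_N''·τ_N − (τ_N')²)/τ_N² (that is, W = w + 2(log τ_N)'') is a solution of P_XXXIV[α+N] on I. -/
/-- The Hankel determinant `τ_N` built from the sequences `ψ` (for `N > 0`) and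
`φ` (for `N < 0`); `τ_0 = 1` (determinant of the empty matrix). -/
noncomputable def hankelTau (ψ φ : ℕ → ℝ → ℝ) (N : ℤ) : ℝ → ℝ :=
  fun z =>
    if 0 ≤ N then
      Matrix.det (Matrix.of fun i j : Fin N.toNat => ψ ((i : ℕ) + (j : ℕ)) z)
    else
      Matrix.det (Matrix.of fun i j : Fin (-N).toNat => φ ((i : ℕ) + (j : ℕ)) z)

/-!
Put `f = w / (2 ψ₀)` and `g = ψ₀`. By (L1) and (L2) they satisfy the symmetric system
`f'' = 2 (z - f g) f`, `g'' = 2 (z - f g) g` with constant Wronskian `f g' - f' g = 2 α`, and for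
any such pair `2 f g` solves P_XXXIV[α]. The Desnanot–Jacobi identity turns the recursion for `ψ`
into the Toda equation `τ_N'' τ_N - τ_N'² + f g τ_N² = τ_{N-1} τ_{N+1}` (with `τ_{-1} = f`), so
that `W = 2 (τ_{N-1} / τ_N) (τ_{N+1} / τ_N)`. It remains to see that `τ_{N-1} / τ_N` and
`τ_{N+1} / τ_N` satisfy the symmetric system again, with `α + N` in place of `α`. In bilinear form
this follows from the Toda equation by induction on `N ≥ 0`, cancelling powers of earlier
determinants on the way. These may vanish as functions of `z`, so the induction takes place in the
ring of polynomials in `z, f, f', g, g'` over `ℤ`: it is a domain, and no determinant vanishes in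
it because no Wronskian `f g' - f' g + 2 N` does. Exchanging `f` and `g` turns `α` into `-α` and
`ψ` into `φ`, which gives `N < 0`.
-/

section Determinants

theorem derivation_prod {S A M ι : Type*} [CommSemiring S] [CommSemiring A] [AddCommMonoid M]
    [Algebra S A] [Module A M] [Module S M] [DecidableEq ι] (D : Derivation S A M)
    (s : Finset ι) (f : ι → A) :
    D (∏ i ∈ s, f i) = ∑ i ∈ s, (∏ j ∈ s.erase i, f j) • D (f i) := by
  induction s using Finset.induction_on with
  | empty => simp
  | insert a s ha ih =>
    have hprod : ∀ i ∈ s, ∏ j ∈ (insert a s).erase i, f j = f a * ∏ j ∈ s.erase i, f j := by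
      intro i hi
      rw [Finset.erase_insert_of_ne (ne_of_mem_of_not_mem hi ha).symm, Finset.prod_insert]
      exact fun h => ha (Finset.mem_of_mem_erase h)
    rw [Finset.prod_insert ha, D.leibniz, ih, Finset.smul_sum, Finset.sum_insert ha,
      Finset.erase_insert ha, add_comm]
    exact congrArg _ (Finset.sum_congr rfl fun i hi => by rw [hprod i hi, mul_smul])

variable {R n : Type*} [CommRing R] [Fintype n] [DecidableEq n]

theorem trace_adjugate_mul (M Y : Matrix n n R) :
    (M.adjugate * Y).trace = ∑ j, (M.updateCol j (Y.col j)).det := by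
  refine Finset.sum_congr rfl fun j _ => ?_
  rw [← Matrix.cramer_apply, Matrix.cramer_eq_adjugate_mulVec]
  rfl

theorem derivation_det {S : Type*} [CommSemiring S] [Algebra S R] (D : Derivation S R R)
    (M : Matrix n n R) : D M.det = (M.adjugate * M.map D).trace := by
  have hprod (σ : Equiv.Perm n) (j : n) :
      ∏ i, M.updateCol j ((M.map D).col j) (σ i) i
        = (∏ i ∈ Finset.univ.erase j, M (σ i) i) * D (M (σ j) j) := by
    rw [← Finset.prod_erase_mul _ _ (Finset.mem_univ j), Matrix.updateCol_self]
    refine congrArg (· * _) (Finset.prod_congr rfl fun i hi => ?_)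
    rw [Matrix.updateCol_ne (Finset.ne_of_mem_erase hi)]
  simp only [trace_adjugate_mul, Matrix.det_apply, hprod]
  rw [Finset.sum_comm, map_sum]
  refine Finset.sum_congr rfl fun σ _ => ?_
  rw [← Finset.smul_sum, Units.smul_def, map_zsmul, derivation_prod, Units.smul_def]
  rfl

theorem det_mul_det_toBlocks₂₂_adjugate {m : Type*} [Fintype m] [DecidableEq m]
    (M : Matrix (m ⊕ n) (m ⊕ n) R) :
    M.det * M.adjugate.toBlocks₂₂.det = M.toBlocks₁₁.det * M.det ^ Fintype.card n := by
  have hmul : M * Matrix.fromBlocks 1 M.adjugate.toBlocks₁₂ 0 M.adjugate.toBlocks₂₂ =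
      Matrix.fromBlocks M.toBlocks₁₁ 0 M.toBlocks₂₁ (M.det • 1) := by
    have hadj := M.mul_adjugate
    rw [← M.adjugate.fromBlocks_toBlocks] at hadj
    ext i (j | j)
    · rcases i with i | i <;>
        simp [Matrix.mul_apply, Matrix.one_apply, Matrix.toBlocks₁₁, Matrix.toBlocks₂₁]
    · have h := congrFun (congrFun hadj i) (Sum.inr j)
      rcases i with i | i <;>
        simpa [Matrix.mul_apply, Matrix.one_apply] using h
  have hdet := congrArg Matrix.det hmul
  rwa [Matrix.det_mul, Matrix.det_fromBlocks_zero₂₁, Matrix.det_fromBlocks_zero₁₂, Matrix.det_one,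
    one_mul, Matrix.det_smul, Matrix.det_one, mul_one] at hdet

theorem det_toBlocks₂₂_adjugate {m : Type*} [Fintype m] [DecidableEq m] [Nonempty n]
    (M : Matrix (m ⊕ n) (m ⊕ n) R) :
    M.adjugate.toBlocks₂₂.det = M.toBlocks₁₁.det * M.det ^ (Fintype.card n - 1) := by
  let X := Matrix.mvPolynomialX (m ⊕ n) (m ⊕ n) ℤ
  have generic : X.adjugate.toBlocks₂₂.det = X.toBlocks₁₁.det * X.det ^ (Fintype.card n - 1) := by
    refine mul_left_cancel₀ (Matrix.det_mvPolynomialX_ne_zero (m ⊕ n) ℤ) ?_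
    rw [mul_left_comm, ← pow_succ', Nat.sub_add_cancel Fintype.card_pos]
    exact det_mul_det_toBlocks₂₂_adjugate X
  let ev := MvPolynomial.aeval (R := ℤ) fun p : (m ⊕ n) × (m ⊕ n) => M p.1 p.2
  have hX : ev.mapMatrix X = M := Matrix.mvPolynomialX_mapMatrix_aeval ℤ M
  have hadj : ev.mapMatrix X.adjugate = M.adjugate := by rw [AlgHom.map_adjugate, hX]
  have h₁₁ : ev.mapMatrix X.toBlocks₁₁ = M.toBlocks₁₁ := congrArg Matrix.toBlocks₁₁ hX
  have h₂₂ : ev.mapMatrix X.adjugate.toBlocks₂₂ = M.adjugate.toBlocks₂₂ :=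
    congrArg Matrix.toBlocks₂₂ hadj
  have h := congrArg ev generic
  rwa [map_mul, map_pow, AlgHom.map_det, AlgHom.map_det, AlgHom.map_det, hX, h₁₁, h₂₂] at h

theorem desnanot_jacobi {N : ℕ} (M : Matrix (Fin (N + 2)) (Fin (N + 2)) R) :
    (M.submatrix (Fin.castSucc ∘ Fin.castSucc) (Fin.castSucc ∘ Fin.castSucc)).det * M.det =
      (M.submatrix Fin.castSucc Fin.castSucc).det *
          (M.submatrix (Fin.last N).castSucc.succAbove (Fin.last N).castSucc.succAbove).det -
        (M.submatrix (Fin.last N).castSucc.succAbove Fin.castSucc).det *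
          (M.submatrix Fin.castSucc (Fin.last N).castSucc.succAbove).det := by
  let e : Fin N ⊕ Fin 2 ≃ Fin (N + 2) := finSumFinEquiv
  have he₀ : e (Sum.inr 0) = (Fin.last N).castSucc := rfl
  have he₁ : e (Sum.inr 1) = Fin.last (N + 1) := rfl
  have h := det_toBlocks₂₂_adjugate (M.submatrix e e)
  have h₁₁ : (M.submatrix e e).toBlocks₁₁ =
      M.submatrix (Fin.castSucc ∘ Fin.castSucc) (Fin.castSucc ∘ Fin.castSucc) := rfl
  simp only [h₁₁, Matrix.det_submatrix_equiv_self, Matrix.adjugate_submatrix_equiv_self,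
    Matrix.det_fin_two, Matrix.toBlocks₂₂, Matrix.of_apply, Matrix.submatrix_apply, he₀, he₁,
    Matrix.adjugate_fin_succ_eq_det_submatrix, Fin.succAbove_last, Fin.val_castSucc, Fin.val_last,
    Fintype.card_fin, Nat.add_one_sub_one, pow_one] at h
  rw [← h]
  have hsign : ((-1 : R) ^ N) ^ 2 = 1 := by rw [← pow_mul, pow_mul', neg_one_sq, one_pow]
  linear_combination (((-1 : R) ^ N) ^ 2 + 1) *
    ((M.submatrix Fin.castSucc Fin.castSucc).det *
          (M.submatrix (Fin.last N).castSucc.succAbove (Fin.last N).castSucc.succAbove).det -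
        (M.submatrix (Fin.last N).castSucc.succAbove Fin.castSucc).det *
          (M.submatrix Fin.castSucc (Fin.last N).castSucc.succAbove).det) * hsign

end Determinants

section HankelMatrix

variable {α R ι κ : Type*}

/-- The matrix of entries `a (r i + c j)`: the Hankel matrix of the sequence `a` with rows and
columns selected by `r` and `c`. -/
def hankelMatrix (a : ℕ → α) (r : ι → ℕ) (c : κ → ℕ) : Matrix ι κ α :=
  Matrix.of fun i j => a (r i + c j)

theorem transpose_hankelMatrix (a : ℕ → α) (r : ι → ℕ) (c : κ → ℕ) :
    (hankelMatrix a r c).transpose = hankelMatrix a c r := by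
  ext i j
  simp [hankelMatrix, add_comm]

theorem updateCol_hankelMatrix [DecidableEq κ] (a : ℕ → α) (r : ι → ℕ) (c : κ → ℕ) (j : κ)
    (m : ℕ) : (hankelMatrix a r c).updateCol j (fun i => a (r i + m)) =
      hankelMatrix a r (Function.update c j m) := by
  ext i k
  by_cases hk : k = j <;> simp [hankelMatrix, hk]

variable [CommRing R] [Fintype ι] [DecidableEq ι]

theorem det_hankelMatrix_comm (a : ℕ → R) (r c : ι → ℕ) :
    (hankelMatrix a r c).det = (hankelMatrix a c r).det := by
  rw [← transpose_hankelMatrix, Matrix.det_transpose]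

theorem det_hankelMatrix_update_eq_zero (a : ℕ → R) (r c : ι → ℕ) {j k : ι} (hkj : k ≠ j) :
    (hankelMatrix a r (Function.update c j (c k))).det = 0 :=
  Matrix.det_zero_of_column_eq hkj fun i => by simp [hankelMatrix, hkj]

theorem trace_adjugate_hankelMatrix_mul (a : ℕ → R) (r c : ι → ℕ) (s : ι → Finset ℕ)
    (t : ι → ℕ → R) :
    ((hankelMatrix a r c).adjugate *
        Matrix.of fun i j => ∑ m ∈ s j, t j m * a (r i + m)).trace =
      ∑ j, ∑ m ∈ s j, t j m * (hankelMatrix a r (Function.update c j m)).det := by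
  rw [trace_adjugate_mul]
  refine Finset.sum_congr rfl fun j _ => ?_
  have hcol : (Matrix.of fun i j => ∑ m ∈ s j, t j m * a (r i + m)).col j =
      ∑ m ∈ s j, t j m • fun i => a (r i + m) := by
    ext i
    simp
  simp only [← updateCol_hankelMatrix, ← Matrix.cramer_apply, hcol, map_sum, map_smul,
    Finset.sum_apply, Pi.smul_apply, smul_eq_mul]

end HankelMatrix

section ConvolutionSeq

variable {R S ι : Type*} [CommRing R] [CommSemiring S] [Algebra S R]

/-- The recursion defining the sequences `ψ` (with `c = φ 0`) and `φ` (with `c = ψ 0`), for a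
derivation `D` in place of `d/dz`. -/
def IsConvolutionSeq (D : Derivation S R R) (c : R) (a : ℕ → R) : Prop :=
  ∀ n, a (n + 1) = D (a n) + c * ∑ k ∈ Finset.range n, a k * a (n - 1 - k)

/-- The solution of the recursion of `IsConvolutionSeq` with seed `g`. -/
def convolutionSeq (D : Derivation S R R) (c g : R) : ℕ → R
  | 0 => g
  | n + 1 => D (convolutionSeq D c g n) +
      c * ∑ k : Fin n, convolutionSeq D c g k * convolutionSeq D c g (n - 1 - k)

theorem convolutionSeq_zero (D : Derivation S R R) (c g : R) : convolutionSeq D c g 0 = g := by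
  rw [convolutionSeq]

theorem isConvolutionSeq_convolutionSeq (D : Derivation S R R) (c g : R) :
    IsConvolutionSeq D c (convolutionSeq D c g) := by
  intro n
  rw [convolutionSeq, Fin.sum_univ_eq_sum_range fun k =>
    convolutionSeq D c g k * convolutionSeq D c g (n - 1 - k)]

theorem sum_range_add_mul (a : ℕ → R) (r c : ℕ) :
    ∑ k ∈ Finset.range (r + c), a k * a (r + c - 1 - k) =
      ∑ k ∈ Finset.range r, a (r - 1 - k) * a (c + k) +
        ∑ m ∈ Finset.range c, a (c - 1 - m) * a (r + m) := by
  rw [Finset.sum_range_add, ← Finset.sum_range_reflect]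
  congr 1 <;> refine Finset.sum_congr rfl fun k hk => ?_ <;> rw [Finset.mem_range] at hk
  · congr 2
    lia
  · rw [mul_comm]
    congr 2
    lia

variable {D : Derivation S R R} {b : R} {a : ℕ → R}

theorem IsConvolutionSeq.derivation_det_hankelMatrix [Fintype ι] [DecidableEq ι]
    (ha : IsConvolutionSeq D b a) (r c : ι → ℕ) :
    D (hankelMatrix a r c).det =
      ∑ j, (hankelMatrix a r (Function.update c j (c j + 1))).det -
        b * (∑ i, ∑ k ∈ Finset.range (r i),
              a (r i - 1 - k) * (hankelMatrix a (Function.update r i k) c).det +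
            ∑ j, ∑ m ∈ Finset.range (c j),
              a (c j - 1 - m) * (hankelMatrix a r (Function.update c j m)).det) := by
  let raise : Matrix ι ι R := Matrix.of fun i j => ∑ m ∈ {c j + 1}, 1 * a (r i + m)
  let lower (r c : ι → ℕ) : Matrix ι ι R :=
    Matrix.of fun i j => ∑ m ∈ Finset.range (c j), a (c j - 1 - m) * a (r i + m)
  have hmap : (hankelMatrix a r c).map D = raise - b • ((lower c r).transpose + lower r c) := by
    ext i j
    have hD : D (a (r i + c j)) = a (r i + c j + 1) -
        b * ∑ k ∈ Finset.range (r i + c j), a k * a (r i + c j - 1 - k) := by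
      rw [ha, add_sub_cancel_right]
    simp [hankelMatrix, raise, lower, hD, sum_range_add_mul, add_assoc, mul_add]
  have hrow : ((hankelMatrix a r c).adjugate * (lower c r).transpose).trace =
      ∑ i, ∑ k ∈ Finset.range (r i),
        a (r i - 1 - k) * (hankelMatrix a (Function.update r i k) c).det := by
    rw [← Matrix.trace_transpose, Matrix.transpose_mul, Matrix.transpose_transpose,
      Matrix.trace_mul_comm, Matrix.adjugate_transpose, transpose_hankelMatrix,
      trace_adjugate_hankelMatrix_mul]
    simp only [det_hankelMatrix_comm a c]
  rw [derivation_det, hmap, Matrix.mul_sub, Matrix.mul_smul, Matrix.mul_add, Matrix.trace_sub,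
    Matrix.trace_smul, Matrix.trace_add, hrow, trace_adjugate_hankelMatrix_mul,
    trace_adjugate_hankelMatrix_mul]
  simp

/-- The determinant of the `n × n` Hankel matrix `(a (i + j))`. -/
def hankelDet (a : ℕ → R) (n : ℕ) : R :=
  (hankelMatrix a (Fin.val : Fin n → ℕ) Fin.val).det

theorem map_hankelDet {R' : Type*} [CommRing R'] (f : R →+* R') (a : ℕ → R) (n : ℕ) :
    f (hankelDet a n) = hankelDet (fun k => f (a k)) n :=
  f.map_det _

/-- The index sequence `0, 1, …, N - 1, N + 1`, which selects the rows or columns of the Hankel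
minors that appear in the derivatives of a Hankel determinant. -/
def gapIndex (N : ℕ) : Fin (N + 1) → ℕ := Function.update Fin.val (Fin.last N) (N + 1)

theorem gapIndex_last (N : ℕ) : gapIndex N (Fin.last N) = N + 1 := by simp [gapIndex]

theorem gapIndex_castSucc {N : ℕ} (i : Fin N) : gapIndex N i.castSucc = i := by
  simp [gapIndex, i.castSucc_lt_last.ne]

theorem update_gapIndex_last (N : ℕ) : Function.update (gapIndex N) (Fin.last N) N = Fin.val := by
  rw [gapIndex, Function.update_idem, Function.update_eq_iff]
  exact ⟨rfl, fun _ _ => rfl⟩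

theorem val_comp_succAbove_castSucc_last (N : ℕ) :
    Fin.val ∘ (Fin.last N).castSucc.succAbove = gapIndex N := by
  ext i
  induction i using Fin.lastCases with
  | last => simp [gapIndex_last]
  | cast i => simp [gapIndex_castSucc, Fin.succAbove, i.castSucc_lt_last]

theorem hankelDet_mul_hankelDet_add_two (a : ℕ → R) (N : ℕ) :
    hankelDet a N * hankelDet a (N + 2) =
      hankelDet a (N + 1) * (hankelMatrix a (gapIndex N) (gapIndex N)).det -
        (hankelMatrix a (gapIndex N) Fin.val).det ^ 2 := by
  have h := desnanot_jacobi (hankelMatrix a (Fin.val : Fin (N + 2) → ℕ) Fin.val)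
  have hsub {m k : ℕ} (e : Fin m → Fin (N + 2)) (f : Fin k → Fin (N + 2)) :
      (hankelMatrix a (Fin.val : Fin (N + 2) → ℕ) Fin.val).submatrix e f =
        hankelMatrix a (Fin.val ∘ e) (Fin.val ∘ f) := rfl
  simp only [hsub, val_comp_succAbove_castSucc_last,
    det_hankelMatrix_comm a (Fin.val ∘ Fin.castSucc) (gapIndex N)] at h
  rw [sq]
  exact h

theorem IsConvolutionSeq.derivation_det_hankelMatrix_val {N : ℕ} (ha : IsConvolutionSeq D b a)
    (r : Fin (N + 1) → ℕ) :
    D (hankelMatrix a r Fin.val).det = (hankelMatrix a r (gapIndex N)).det -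
      b * ∑ i, ∑ k ∈ Finset.range (r i),
        a (r i - 1 - k) * (hankelMatrix a (Function.update r i k) Fin.val).det := by
  have hraise : ∑ j : Fin (N + 1), (hankelMatrix a r (Function.update Fin.val j (j + 1))).det =
      (hankelMatrix a r (gapIndex N)).det := by
    rw [Fin.sum_univ_castSucc, Finset.sum_eq_zero, zero_add]
    · rfl
    · intro j _
      exact det_hankelMatrix_update_eq_zero a r Fin.val (k := j.succ) j.castSucc_lt_succ.ne'
  have hlower (j : Fin (N + 1)) : ∑ m ∈ Finset.range j,
      a (j - 1 - m) * (hankelMatrix a r (Function.update Fin.val j m)).det = 0 := by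
    refine Finset.sum_eq_zero fun m hm => mul_eq_zero_of_right _ ?_
    have hmj : m < j := Finset.mem_range.1 hm
    exact det_hankelMatrix_update_eq_zero a r Fin.val (k := ⟨m, hmj.trans j.isLt⟩)
      (Fin.ne_of_lt hmj)
  rw [ha.derivation_det_hankelMatrix, hraise, Finset.sum_eq_zero fun j _ => hlower j, add_zero]

theorem IsConvolutionSeq.derivation_hankelDet_succ (ha : IsConvolutionSeq D b a) (N : ℕ) :
    D (hankelDet a (N + 1)) = (hankelMatrix a (gapIndex N) Fin.val).det := by
  have hlower (i : Fin (N + 1)) : ∑ k ∈ Finset.range i,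
      a (i - 1 - k) * (hankelMatrix a (Function.update Fin.val i k) Fin.val).det = 0 := by
    refine Finset.sum_eq_zero fun k hk => mul_eq_zero_of_right _ ?_
    have hki : k < i := Finset.mem_range.1 hk
    rw [det_hankelMatrix_comm]
    exact det_hankelMatrix_update_eq_zero a Fin.val Fin.val (k := ⟨k, hki.trans i.isLt⟩)
      (Fin.ne_of_lt hki)
  rw [hankelDet, ha.derivation_det_hankelMatrix_val, Finset.sum_eq_zero fun i _ => hlower i,
    mul_zero, sub_zero, det_hankelMatrix_comm]

theorem IsConvolutionSeq.derivation_derivation_hankelDet_succ (ha : IsConvolutionSeq D b a)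
    (N : ℕ) :
    D (D (hankelDet a (N + 1))) = (hankelMatrix a (gapIndex N) (gapIndex N)).det -
      b * a 0 * hankelDet a (N + 1) := by
  have hzero (i : Fin (N + 1)) {k : Fin N} (hki : k.castSucc ≠ i) :
      (hankelMatrix a (Function.update (gapIndex N) i k) Fin.val).det = 0 := by
    rw [det_hankelMatrix_comm, ← gapIndex_castSucc k]
    exact det_hankelMatrix_update_eq_zero a Fin.val (gapIndex N) hki
  have hcast (i : Fin N) : ∑ k ∈ Finset.range i, a (i - 1 - k) *
      (hankelMatrix a (Function.update (gapIndex N) i.castSucc k) Fin.val).det = 0 := by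
    refine Finset.sum_eq_zero fun k hk => mul_eq_zero_of_right _ ?_
    have hki : k < i := Finset.mem_range.1 hk
    exact hzero _ (k := ⟨k, hki.trans i.isLt⟩) (Fin.ne_of_lt hki)
  have hlast : ∑ k ∈ Finset.range N, a (N - k) *
      (hankelMatrix a (Function.update (gapIndex N) (Fin.last N) k) Fin.val).det = 0 :=
    Finset.sum_eq_zero fun k hk => mul_eq_zero_of_right _ <|
      hzero _ (k := ⟨k, Finset.mem_range.1 hk⟩) (Fin.castSucc_lt_last _).ne
  rw [ha.derivation_hankelDet_succ, ha.derivation_det_hankelMatrix_val, Fin.sum_univ_castSucc]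
  simp only [gapIndex_castSucc, gapIndex_last, hcast, Finset.sum_range_succ, hlast,
    update_gapIndex_last, Finset.sum_const_zero, zero_add, Nat.add_sub_cancel, Nat.sub_self,
    hankelDet, mul_assoc]

theorem IsConvolutionSeq.hankelDet_toda (ha : IsConvolutionSeq D b a) (N : ℕ) :
    hankelDet a N * hankelDet a (N + 2) =
      hankelDet a (N + 1) * D (D (hankelDet a (N + 1))) - D (hankelDet a (N + 1)) ^ 2 +
        b * a 0 * hankelDet a (N + 1) ^ 2 := by
  rw [hankelDet_mul_hankelDet_add_two, ha.derivation_derivation_hankelDet_succ,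
    ha.derivation_hankelDet_succ]
  ring

end ConvolutionSeq

section Bilinear

variable {R S : Type*} [CommRing R] [CommSemiring S] [Algebra S R] (D : Derivation S R R)

/-- Hirota's bilinear operator of order one, the numerator of the derivative of `f / g`. -/
def hirotaD (f g : R) : R := D f * g - f * D g

/-- Hirota's bilinear operator of order two. -/
def hirotaD₂ (f g : R) : R := D (D f) * g - 2 * (D f * D g) + f * D (D g)

/-- The bilinear form of the statement that `(f / g, h / g)` solves the symmetric form of
P_XXXIV (see `IsP34Pair`) with parameter `K / 2`, where `f`, `g`, `h` play the role of `τ_{N-1}`,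
`τ_N`, `τ_{N+1}`, the independent variable is `z`, and `c` is half of the seed solution `w`. -/
structure IsP34Triple (z c K f g h : R) : Prop where
  toda : f * h = g * D (D g) - D g ^ 2 + c * g ^ 2
  wronskian : hirotaD D h f = K * g ^ 2
  left : hirotaD₂ D f g = 2 * (z - c) * (f * g)
  right : hirotaD₂ D h g = 2 * (z - c) * (h * g)

variable {D} {z c K f g h k : R}

theorem hirotaD₂_comm (f g : R) : hirotaD₂ D f g = hirotaD₂ D g f := by
  simp only [hirotaD₂]
  ring

theorem derivation_hirotaD (f g : R) : D (hirotaD D f g) = D (D f) * g - f * D (D g) := by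
  simp only [hirotaD, map_sub, D.leibniz, smul_eq_mul]
  ring

namespace IsP34Triple

theorem hirotaD_succ (T : IsP34Triple D z c K f g h) (hz : D z = 1) (hg : IsLeftRegular g)
    (htoda : g * k = h * D (D h) - D h ^ 2 + c * h ^ 2) :
    hirotaD D k g = (K + 2) * h ^ 2 := by
  have hD2 : D (2 : R) = 0 := by simpa using D.map_natCast 2
  obtain ⟨toda, wronskian, -, right⟩ := T
  have dtoda := congrArg D toda
  have dright := congrArg D right
  have dhtoda := congrArg D htoda
  simp only [hirotaD, hirotaD₂] at wronskian right dright ⊢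
  simp only [map_add, map_sub, D.leibniz, D.leibniz_pow, smul_eq_mul, hz, hD2, nsmul_eq_mul,
    Nat.cast_ofNat, pow_one, Nat.add_one_sub_one, mul_zero, add_zero] at dtoda dright dhtoda
  refine hg.pow 2 ?_
  linear_combination g ^ 2 * dhtoda - 2 * g * D g * htoda + g * h * dright -
    (g * D h + h * D g) * right + h ^ 2 * dtoda - 2 * h * D h * toda + h ^ 2 * wronskian

theorem hirotaD₂_succ (T : IsP34Triple D z c K f g h) (hg : IsLeftRegular g) (hK : D K = 0)
    (hwronskian : hirotaD D k g = (K + 2) * h ^ 2) :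
    hirotaD₂ D k h = 2 * (z - c) * (k * h) := by
  have hD2 : D (2 : R) = 0 := by simpa using D.map_natCast 2
  have right := T.right
  have dwronskian := (derivation_hirotaD k g).symm.trans (congrArg D hwronskian)
  simp only [D.leibniz, D.leibniz_pow, smul_eq_mul, map_add, hK, hD2, nsmul_eq_mul,
    Nat.cast_ofNat, pow_one, Nat.add_one_sub_one, mul_zero, add_zero] at dwronskian
  simp only [hirotaD, hirotaD₂] at hwronskian right ⊢
  refine hg ?_
  linear_combination h * dwronskian + k * right - 2 * D h * hwronskian

theorem succ (T : IsP34Triple D z c K f g h) (hz : D z = 1) (hK : D K = 0)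
    (hg : IsLeftRegular g) (htoda : g * k = h * D (D h) - D h ^ 2 + c * h ^ 2) :
    IsP34Triple D z c (K + 2) g h k where
  toda := htoda
  wronskian := T.hirotaD_succ hz hg htoda
  left := by rw [hirotaD₂_comm, T.right, mul_comm h g]
  right := T.hirotaD₂_succ hg hK (T.hirotaD_succ hz hg htoda)

theorem right_ne_zero [NoZeroDivisors R] (T : IsP34Triple D z c K f g h) (hK : K ≠ 0)
    (hg : g ≠ 0) : h ≠ 0 := by
  rintro rfl
  exact mul_ne_zero hK (pow_ne_zero 2 hg) (by simp [← T.wronskian, hirotaD])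

end IsP34Triple

/-- The determinants `τ_{n-1}` for `n : ℕ`, where `τ_{-1} = f`. -/
def shiftedTau (f : R) (a : ℕ → R) : ℕ → R
  | 0 => f
  | n + 1 => hankelDet a n

theorem isP34Triple_shiftedTau [IsDomain R] {a : ℕ → R} (hz : D z = 1)
    (hf : D (D f) = 2 * (z - f * a 0) * f) (hg : D (D (a 0)) = 2 * (z - f * a 0) * a 0)
    (ha : IsConvolutionSeq D f a) (hne : ∀ n : ℕ, hirotaD D (a 0) f + 2 * n ≠ 0) (n : ℕ) :
    IsP34Triple D z (f * a 0) (hirotaD D (a 0) f + 2 * n)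
      (shiftedTau f a n) (shiftedTau f a (n + 1)) (shiftedTau f a (n + 2)) := by
  have hK (n : ℕ) : D (hirotaD D (a 0) f + 2 * n) = 0 := by
    have hD2 : D ((2 * n : ℕ) : R) = 0 := D.map_natCast _
    push_cast at hD2
    rw [map_add, derivation_hirotaD, hf, hg, hD2]
    ring
  suffices shiftedTau f a (n + 1) ≠ 0 ∧ IsP34Triple D z (f * a 0) (hirotaD D (a 0) f + 2 * n)
      (shiftedTau f a n) (shiftedTau f a (n + 1)) (shiftedTau f a (n + 2)) from this.2
  induction n with
  | zero =>
    have h₁ : hankelDet a 0 = 1 := Matrix.det_fin_zero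
    have h₂ : hankelDet a 1 = a 0 := Matrix.det_fin_one _
    simp only [shiftedTau, h₁, h₂]
    refine ⟨one_ne_zero, ⟨by simp, by simp, ?_, ?_⟩⟩
    · simpa [hirotaD₂] using hf
    · simpa [hirotaD₂] using hg
  | succ n ih =>
    obtain ⟨hne₁, T⟩ := ih
    refine ⟨T.right_ne_zero (hne n) hne₁, ?_⟩
    have hK_succ : hirotaD D (a 0) f + 2 * ((n + 1 : ℕ) : R) =
        hirotaD D (a 0) f + 2 * n + 2 := by
      push_cast
      ring
    rw [hK_succ]
    exact T.succ hz (hK n) (IsRegular.of_ne_zero hne₁).left (ha.hankelDet_toda n)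

end Bilinear

section DifferentialEval

variable {𝕜 R S : Type*} [NontriviallyNormedField 𝕜] [CommRing R] [CommSemiring S] [Algebra S R]
  {D : Derivation S R R} {U : Set 𝕜} {ev : R →+* (𝕜 → 𝕜)}

theorem hasDerivAt_deriv_of_isOpen {E : Type*} [NormedAddCommGroup E] [NormedSpace 𝕜 E]
    {f f' : 𝕜 → E} {f'' : E} {x : 𝕜} (hU : IsOpen U) (hf : ∀ y ∈ U, HasDerivAt f (f' y) y)
    (hx : x ∈ U) (hf' : HasDerivAt f' f'' x) :
    HasDerivAt (deriv f) f'' x :=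
  hf'.congr_of_eventuallyEq <|
    Filter.eventually_of_mem (hU.mem_nhds hx) fun y hy => (hf y hy).deriv

/-- Homomorphisms of differential rings from `(R, D)` to functions on `U` with `d/dz`. Since
derivatives are only controlled on `U`, the target is the ring of all functions `𝕜 → 𝕜`. -/
def IsDifferentialEval (D : Derivation S R R) (U : Set 𝕜) (ev : R →+* (𝕜 → 𝕜)) : Prop :=
  ∀ P, ∀ x ∈ U, HasDerivAt (ev P) (ev (D P) x) x

open MvPolynomial in
theorem isDifferentialEval_aeval {σ : Type*}
    {D : Derivation ℤ (MvPolynomial σ ℤ) (MvPolynomial σ ℤ)} {v : σ → 𝕜 → 𝕜}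
    (hv : ∀ i, ∀ x ∈ U, HasDerivAt (v i) (aeval v (D (X i)) x) x) :
    IsDifferentialEval D U (aeval v : MvPolynomial σ ℤ →ₐ[ℤ] 𝕜 → 𝕜).toRingHom := by
  intro P x hx
  induction P using MvPolynomial.induction_on with
  | C m =>
    have hm : (aeval v : MvPolynomial σ ℤ →ₐ[ℤ] 𝕜 → 𝕜) (C m) = fun _ => (m : 𝕜) := aeval_C ..
    rw [derivation_C, map_zero, AlgHom.toRingHom_eq_coe, RingHom.coe_coe, hm]
    exact hasDerivAt_const x (m : 𝕜)
  | add P Q hP hQ => simpa using hP.add hQ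
  | mul_X P i hP => simpa [D.leibniz, add_comm, mul_comm] using hP.mul (hv i x hx)

namespace IsDifferentialEval

theorem deriv_eq (hev : IsDifferentialEval D U ev) (P : R) {x : 𝕜} (hx : x ∈ U) :
    deriv (ev P) x = ev (D P) x :=
  (hev P x hx).deriv

theorem deriv_deriv_eq (hev : IsDifferentialEval D U ev) (hU : IsOpen U) (P : R) {x : 𝕜}
    (hx : x ∈ U) : deriv (deriv (ev P)) x = ev (D (D P)) x :=
  (hasDerivAt_deriv_of_isOpen hU (hev P) hx (hev _ x hx)).deriv

theorem hasDerivAt_div (hev : IsDifferentialEval D U ev) (P : R) {G : R} {x : 𝕜} (hx : x ∈ U)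
    (hG : ev G x ≠ 0) :
    HasDerivAt (fun y => ev P y / ev G y) (ev (hirotaD D P G) x / ev G x ^ 2) x := by
  simpa [hirotaD] using (hev P x hx).fun_div (hev G x hx) hG

theorem hasDerivAt_deriv_div (hev : IsDifferentialEval D U ev) (hU : IsOpen U) (P : R) {G : R}
    (hG : ∀ y ∈ U, ev G y ≠ 0) {x : 𝕜} (hx : x ∈ U) :
    HasDerivAt (deriv fun y => ev P y / ev G y)
      (ev (G * hirotaD₂ D P G - 2 * P * (G * D (D G) - D G ^ 2)) x / ev G x ^ 3) x := by
  refine hasDerivAt_deriv_of_isOpen hU (fun y hy => hev.hasDerivAt_div P hy (hG y hy)) hx ?_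
  have hGx := hG x hx
  refine ((hev (hirotaD D P G) x hx).fun_div ((hev G x hx).fun_pow 2)
    (pow_ne_zero 2 hGx)).congr_deriv ?_
  rw [derivation_hirotaD]
  simp only [hirotaD, hirotaD₂, map_sub, map_add, map_mul, map_pow, map_ofNat, Pi.sub_apply,
    Pi.add_apply, Pi.mul_apply, Pi.pow_apply, Pi.ofNat_apply]
  field_simp
  ring

end IsDifferentialEval

end DifferentialEval

section P34

variable {𝕜 : Type*} [NontriviallyNormedField 𝕜] {α : 𝕜} {U : Set 𝕜} {f g w W : 𝕜 → 𝕜}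

/-- `w` is a twice differentiable solution of P_XXXIV[α] on `U`. -/
structure IsP34Solution (α : 𝕜) (U : Set 𝕜) (w : 𝕜 → 𝕜) : Prop where
  differentiableOn : DifferentiableOn 𝕜 w U
  differentiableOn_deriv : DifferentiableOn 𝕜 (deriv w) U
  equation : ∀ z ∈ U, 2 * w z * deriv (deriv w) z - deriv w z ^ 2 + 4 * w z ^ 3
    - 8 * z * w z ^ 2 + 16 * α ^ 2 = 0

theorem IsP34Solution.neg (hw : IsP34Solution α U w) : IsP34Solution (-α) U w where
  differentiableOn := hw.differentiableOn
  differentiableOn_deriv := hw.differentiableOn_deriv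
  equation z hz := by
    rw [neg_sq]
    exact hw.equation z hz

theorem IsP34Solution.congr (hw : IsP34Solution α U w) (hU : IsOpen U) (h : Set.EqOn W w U) :
    IsP34Solution α U W where
  differentiableOn := hw.differentiableOn.congr h
  differentiableOn_deriv := hw.differentiableOn_deriv.congr (h.deriv hU)
  equation z hz := by
    rw [h hz, h.deriv hU hz, (h.deriv hU).deriv hU hz]
    exact hw.equation z hz

/-- The symmetric form of P_XXXIV[α] on `U`: the Hamiltonian system `f'' = 2 (z - f g) f`,
`g'' = 2 (z - f g) g`, on the level set `2 α` of the Wronskian `f g' - f' g`. -/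
structure IsP34Pair (α : 𝕜) (U : Set 𝕜) (f g : 𝕜 → 𝕜) : Prop where
  differentiableOn_left : DifferentiableOn 𝕜 f U
  differentiableOn_right : DifferentiableOn 𝕜 g U
  hasDerivAt_deriv_left : ∀ z ∈ U, HasDerivAt (deriv f) (2 * (z - f z * g z) * f z) z
  hasDerivAt_deriv_right : ∀ z ∈ U, HasDerivAt (deriv g) (2 * (z - f z * g z) * g z) z
  wronskian : ∀ z ∈ U, f z * deriv g z - deriv f z * g z = 2 * α

namespace IsP34Pair

theorem symm (h : IsP34Pair α U f g) : IsP34Pair (-α) U g f where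
  differentiableOn_left := h.differentiableOn_right
  differentiableOn_right := h.differentiableOn_left
  hasDerivAt_deriv_left z hz := by
    rw [mul_comm (g z) (f z)]
    exact h.hasDerivAt_deriv_right z hz
  hasDerivAt_deriv_right z hz := by
    rw [mul_comm (g z) (f z)]
    exact h.hasDerivAt_deriv_left z hz
  wronskian z hz := by linear_combination -h.wronskian z hz

theorem hasDerivAt_left (h : IsP34Pair α U f g) (hU : IsOpen U) {z : 𝕜} (hz : z ∈ U) :
    HasDerivAt f (deriv f z) z :=
  (h.differentiableOn_left.differentiableAt (hU.mem_nhds hz)).hasDerivAt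

theorem isP34Solution (h : IsP34Pair α U f g) (hU : IsOpen U) :
    IsP34Solution α U (fun z => 2 * (f z * g z)) := by
  have hw (z : 𝕜) (hz : z ∈ U) : HasDerivAt (fun z => 2 * (f z * g z))
      (2 * (deriv f z * g z + f z * deriv g z)) z :=
    ((h.hasDerivAt_left hU hz).fun_mul (h.symm.hasDerivAt_left hU hz)).const_mul 2
  have hw' (z : 𝕜) (hz : z ∈ U) : HasDerivAt (deriv fun z => 2 * (f z * g z))
      (4 * (deriv f z * deriv g z + 2 * (z - f z * g z) * (f z * g z))) z := by
    refine hasDerivAt_deriv_of_isOpen hU hw hz ?_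
    have hf'g := (h.hasDerivAt_deriv_left z hz).fun_mul (h.symm.hasDerivAt_left hU hz)
    have hfg' := (h.hasDerivAt_left hU hz).fun_mul (h.hasDerivAt_deriv_right z hz)
    refine ((hf'g.fun_add hfg').const_mul 2).congr_deriv ?_
    ring
  refine ⟨fun z hz => (hw z hz).differentiableAt.differentiableWithinAt,
    fun z hz => (hw' z hz).differentiableAt.differentiableWithinAt, fun z hz => ?_⟩
  rw [(hw z hz).deriv, (hw' z hz).deriv]
  linear_combination (-4 * (f z * deriv g z - deriv f z * g z) - 8 * α) * h.wronskian z hz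

end IsP34Pair

theorem isP34Pair_of_linear_equations [NeZero (2 : 𝕜)] (hU : IsOpen U) {ψ0 : 𝕜 → 𝕜}
    (hw : DifferentiableOn 𝕜 w U) (hψ0 : DifferentiableOn 𝕜 ψ0 U)
    (hψ0' : DifferentiableOn 𝕜 (deriv ψ0) U) (hψ0_ne : ∀ z ∈ U, ψ0 z ≠ 0)
    (hL1 : ∀ z ∈ U, 2 * w z * deriv ψ0 z - deriv w z * ψ0 z - 4 * α * ψ0 z = 0)
    (hL2 : ∀ z ∈ U, deriv (deriv ψ0) z + (w z - 2 * z) * ψ0 z = 0) :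
    IsP34Pair α U (fun z => w z / (2 * ψ0 z)) ψ0 := by
  have h2 : (2 : 𝕜) ≠ 0 := two_ne_zero
  have hψ (z : 𝕜) (hz : z ∈ U) : HasDerivAt ψ0 (deriv ψ0 z) z :=
    (hψ0.differentiableAt (hU.mem_nhds hz)).hasDerivAt
  -- (L1) expresses `w'` through `w` and `ψ0'`, so `f = w / (2 ψ0)` is twice differentiable.
  have hf (z : 𝕜) (hz : z ∈ U) : HasDerivAt (fun z => w z / (2 * ψ0 z))
      ((w z / (2 * ψ0 z) * deriv ψ0 z - 2 * α) / ψ0 z) z := by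
    have hψz := hψ0_ne z hz
    have hw' := (hw.differentiableAt (hU.mem_nhds hz)).hasDerivAt
    refine (hw'.fun_div ((hψ z hz).const_mul 2) (mul_ne_zero h2 hψz)).congr_deriv ?_
    field_simp
    linear_combination -hL1 z hz
  have hψ' (z : 𝕜) (hz : z ∈ U) :
      HasDerivAt (deriv ψ0) (2 * (z - w z / (2 * ψ0 z) * ψ0 z) * ψ0 z) z := by
    have hψz := hψ0_ne z hz
    refine (hψ0'.differentiableAt (hU.mem_nhds hz)).hasDerivAt.congr_deriv ?_
    field_simp
    linear_combination hL2 z hz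
  have hf' (z : 𝕜) (hz : z ∈ U) : HasDerivAt (deriv fun z => w z / (2 * ψ0 z))
      (2 * (z - w z / (2 * ψ0 z) * ψ0 z) * (w z / (2 * ψ0 z))) z := by
    have hψz := hψ0_ne z hz
    refine hasDerivAt_deriv_of_isOpen hU hf hz ?_
    refine ((((hf z hz).fun_mul (hψ' z hz)).sub_const (2 * α)).fun_div (hψ z hz)
      hψz).congr_deriv ?_
    field_simp
    ring
  refine ⟨fun z hz => (hf z hz).differentiableAt.differentiableWithinAt, hψ0, hf', hψ',
    fun z hz => ?_⟩
  rw [(hf z hz).deriv, div_mul_cancel₀ _ (hψ0_ne z hz), sub_sub_cancel]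

theorem IsP34Triple.isP34Pair_div {R S : Type*} [CommRing R] [CommSemiring S] [Algebra S R]
    {D : Derivation S R R} {ζ c K F G H : R} (T : IsP34Triple D ζ c K F G H) (hU : IsOpen U)
    {ev : R →+* (𝕜 → 𝕜)} (hev : IsDifferentialEval D U ev) (hζ : ∀ z ∈ U, ev ζ z = z)
    (hK : ∀ z ∈ U, ev K z = 2 * α) (hG : ∀ z ∈ U, ev G z ≠ 0) :
    IsP34Pair α U (fun z => ev F z / ev G z) (fun z => ev H z / ev G z) := by
  have hdiv (P : R) : DifferentiableOn 𝕜 (fun z => ev P z / ev G z) U := fun z hz =>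
    (hev.hasDerivAt_div P hz (hG z hz)).differentiableAt.differentiableWithinAt
  have hdiv' {P : R} (hP : hirotaD₂ D P G = 2 * (ζ - c) * (P * G)) (z : 𝕜) (hz : z ∈ U) :
      HasDerivAt (deriv fun z => ev P z / ev G z)
        (2 * (z - ev F z / ev G z * (ev H z / ev G z)) * (ev P z / ev G z)) z := by
    have hGz := hG z hz
    have hnum : G * hirotaD₂ D P G - 2 * P * (G * D (D G) - D G ^ 2) =
        2 * (ζ * G ^ 2 - F * H) * P := by
      linear_combination G * hP + 2 * P * T.toda
    refine (hev.hasDerivAt_deriv_div hU P hG hz).congr_deriv ?_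
    simp only [hnum, map_mul, map_sub, map_pow, map_ofNat, Pi.mul_apply, Pi.sub_apply,
      Pi.pow_apply, Pi.ofNat_apply, hζ z hz]
    field_simp
  refine ⟨hdiv F, hdiv H, hdiv' T.left, hdiv' T.right, fun z hz => ?_⟩
  have hGz := hG z hz
  have hwronskian := congrFun (congrArg ev T.wronskian) z
  rw [(hev.hasDerivAt_div F hz hGz).deriv, (hev.hasDerivAt_div H hz hGz).deriv]
  simp only [hirotaD, map_mul, map_sub, map_pow, Pi.mul_apply, Pi.sub_apply, Pi.pow_apply,
    hK z hz] at hwronskian ⊢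
  field_simp
  linear_combination ev G z * hwronskian

end P34

section Jets

open MvPolynomial

/-- The coordinates `z, f, f', g, g'` on the phase space of the system of `IsP34Pair`. -/
inductive JetVar
  | z | f | f₁ | g | g₁

/-- The universal ring of polynomial expressions in the coordinates of `JetVar`. The coefficients
are integers so that it is a domain of characteristic zero. -/
abbrev JetRing : Type := MvPolynomial JetVar ℤ

/-- The total derivative along the system of `IsP34Pair`. -/
noncomputable def jetD : Derivation ℤ JetRing JetRing :=
  mkDerivation ℤ fun
    | .z => 1
    | .f => X .f₁
    | .f₁ => 2 * (X .z - X .f * X .g) * X .f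
    | .g => X .g₁
    | .g₁ => 2 * (X .z - X .f * X .g) * X .g

/-- The universal instance of the sequence `ψ`, with `w = 2 f g` and `ψ 0 = g`. -/
noncomputable def jetSeq : ℕ → JetRing := convolutionSeq jetD (X .f) (X .g)

theorem jetSeq_zero : jetSeq 0 = X .g := convolutionSeq_zero ..

theorem isConvolutionSeq_jetSeq : IsConvolutionSeq jetD (X .f) jetSeq :=
  isConvolutionSeq_convolutionSeq _ _ _

theorem jetD_X_z : jetD (X .z) = 1 := mkDerivation_X ..

theorem jetD_X_f : jetD (X .f) = X .f₁ := mkDerivation_X ..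

theorem jetD_X_f₁ : jetD (X .f₁) = 2 * (X .z - X .f * X .g) * X .f := mkDerivation_X ..

theorem jetD_X_g : jetD (X .g) = X .g₁ := mkDerivation_X ..

theorem jetD_X_g₁ : jetD (X .g₁) = 2 * (X .z - X .f * X .g) * X .g := mkDerivation_X ..

theorem hirotaD_jetD_X_g_X_f : hirotaD jetD (X .g) (X .f) = X .g₁ * X .f - X .g * X .f₁ := by
  rw [hirotaD, jetD_X_f, jetD_X_g]

theorem hirotaD_jetD_X_g_X_f_add_ne_zero (n : ℕ) :
    hirotaD jetD (X .g) (X .f) + 2 * n ≠ 0 := by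
  let point : JetVar → ℤ
    | .f | .g₁ => 1
    | .z | .f₁ | .g => 0
  intro h
  have heval := congrArg (eval point) h
  simp only [hirotaD_jetD_X_g_X_f, map_add, map_sub, map_mul, map_ofNat, map_natCast, map_zero,
    eval_X, point] at heval
  lia

theorem isP34Triple_jetSeq (n : ℕ) :
    IsP34Triple jetD (X .z) (X .f * X .g) (hirotaD jetD (X .g) (X .f) + 2 * n)
      (shiftedTau (X .f) jetSeq n) (hankelDet jetSeq n) (hankelDet jetSeq (n + 1)) := by
  rw [← jetSeq_zero]
  refine isP34Triple_shiftedTau jetD_X_z ?_ ?_ isConvolutionSeq_jetSeq ?_ n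
  · rw [jetD_X_f, jetD_X_f₁, jetSeq_zero]
  · rw [jetSeq_zero, jetD_X_g, jetD_X_g₁]
  · simpa only [jetSeq_zero] using hirotaD_jetD_X_g_X_f_add_ne_zero

variable {𝕜 : Type*} [NontriviallyNormedField 𝕜] {α : 𝕜} {U : Set 𝕜} {f g : 𝕜 → 𝕜}

/-- Evaluation of a universal polynomial at `z`, `f`, `f'`, `g`, `g'`. -/
noncomputable def jetEval (f g : 𝕜 → 𝕜) : JetRing →+* (𝕜 → 𝕜) :=
  (aeval (R := ℤ) fun
    | .z => id
    | .f => f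
    | .f₁ => deriv f
    | .g => g
    | .g₁ => deriv g : JetRing →ₐ[ℤ] 𝕜 → 𝕜).toRingHom

theorem jetEval_X_z : jetEval f g (X .z) = id := aeval_X ..

theorem jetEval_X_f : jetEval f g (X .f) = f := aeval_X ..

theorem jetEval_X_f₁ : jetEval f g (X .f₁) = deriv f := aeval_X ..

theorem jetEval_X_g : jetEval f g (X .g) = g := aeval_X ..

theorem jetEval_X_g₁ : jetEval f g (X .g₁) = deriv g := aeval_X ..

namespace IsP34Pair

theorem isDifferentialEval_jetEval (h : IsP34Pair α U f g) (hU : IsOpen U) :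
    IsDifferentialEval jetD U (jetEval f g) := by
  refine isDifferentialEval_aeval fun i z hz => ?_
  cases i with
  | z => simpa [jetD_X_z] using hasDerivAt_id z
  | f => simpa [jetD_X_f] using h.hasDerivAt_left hU hz
  | f₁ => simpa [jetD_X_f₁] using h.hasDerivAt_deriv_left z hz
  | g => simpa [jetD_X_g] using h.symm.hasDerivAt_left hU hz
  | g₁ => simpa [jetD_X_g₁] using h.hasDerivAt_deriv_right z hz

theorem jetEval_jetSeq (h : IsP34Pair α U f g) (hU : IsOpen U) {a : ℕ → 𝕜 → 𝕜}
    (ha_zero : ∀ z ∈ U, a 0 z = g z)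
    (ha_rec : ∀ n, ∀ z ∈ U, a (n + 1) z =
      deriv (a n) z + f z * ∑ k ∈ Finset.range n, a k z * a (n - 1 - k) z)
    (n : ℕ) : Set.EqOn (a n) (jetEval f g (jetSeq n)) U := by
  induction n using Nat.strong_induction_on with
  | h n ih =>
    intro z hz
    cases n with
    | zero => rw [ha_zero z hz, jetSeq_zero, jetEval_X_g]
    | succ n =>
      have hsum : ∑ k ∈ Finset.range n, a k z * a (n - 1 - k) z = ∑ k ∈ Finset.range n,
          jetEval f g (jetSeq k) z * jetEval f g (jetSeq (n - 1 - k)) z :=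
        Finset.sum_congr rfl fun k hk => by
          have hkn := Finset.mem_range.1 hk
          rw [ih k (by lia) hz, ih (n - 1 - k) (by lia) hz]
      rw [ha_rec n z hz, (ih n n.lt_succ_self).deriv hU hz, hsum,
        (h.isDifferentialEval_jetEval hU).deriv_eq _ hz, isConvolutionSeq_jetSeq n]
      simp [jetEval_X_f]

theorem isP34Solution_hankelDet (h : IsP34Pair α U f g) (hU : IsOpen U) {a : ℕ → 𝕜 → 𝕜}
    (ha_zero : ∀ z ∈ U, a 0 z = g z)
    (ha_rec : ∀ n, ∀ z ∈ U, a (n + 1) z =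
      deriv (a n) z + f z * ∑ k ∈ Finset.range n, a k z * a (n - 1 - k) z)
    (n : ℕ) {τ : 𝕜 → 𝕜} (hτ : ∀ z ∈ U, τ z = hankelDet (a · z) n) (hτ_ne : ∀ z ∈ U, τ z ≠ 0) :
    IsP34Solution (α + n) U (fun z => 2 * (f z * g z) +
      2 * (deriv (deriv τ) z * τ z - deriv τ z ^ 2) / τ z ^ 2) := by
  have hev := h.isDifferentialEval_jetEval hU
  have hτ_eval : Set.EqOn τ (jetEval f g (hankelDet jetSeq n)) U := by
    intro z hz
    have ha (k : ℕ) := h.jetEval_jetSeq hU ha_zero ha_rec k hz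
    rw [hτ z hz, funext ha]
    exact (map_hankelDet ((Pi.evalRingHom _ z).comp (jetEval f g)) jetSeq n).symm
  have hG_ne (z : 𝕜) (hz : z ∈ U) : jetEval f g (hankelDet jetSeq n) z ≠ 0 :=
    hτ_eval hz ▸ hτ_ne z hz
  have T := isP34Triple_jetSeq n
  have hK (z : 𝕜) (hz : z ∈ U) :
      jetEval f g (hirotaD jetD (X .g) (X .f) + 2 * n) z = 2 * (α + n) := by
    simp only [hirotaD_jetD_X_g_X_f, map_add, map_sub, map_mul, map_ofNat, map_natCast,
      jetEval_X_f, jetEval_X_f₁, jetEval_X_g, jetEval_X_g₁, Pi.add_apply, Pi.sub_apply,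
      Pi.mul_apply, Pi.ofNat_apply, Pi.natCast_apply]
    linear_combination h.wronskian z hz
  refine ((T.isP34Pair_div hU hev (fun z _ => congrFun jetEval_X_z z) hK hG_ne).isP34Solution
    hU).congr hU fun z hz => ?_
  have hGz := hG_ne z hz
  have htoda := congrFun (congrArg (jetEval f g) T.toda) z
  simp only [map_add, map_sub, map_mul, map_pow, Pi.add_apply, Pi.sub_apply, Pi.mul_apply,
    Pi.pow_apply, jetEval_X_f, jetEval_X_g] at htoda
  simp only [hτ_eval hz, hτ_eval.deriv hU hz, (hτ_eval.deriv hU).deriv hU hz,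
    hev.deriv_eq _ hz, hev.deriv_deriv_eq hU _ hz]
  field_simp
  linear_combination -2 * htoda

end IsP34Pair

end Jets

/-- The determinants `τ_N` of `hankelTau`, for sequences in a commutative ring. -/
def signedHankelDet {R : Type*} [CommRing R] (a b : ℕ → R) (N : ℤ) : R :=
  if 0 ≤ N then hankelDet a N.toNat else hankelDet b (-N).toNat

theorem painleve34_determinant_formula_general
    {𝕜 : Type*} [NontriviallyNormedField 𝕜] [NeZero (2 : 𝕜)] {U : Set 𝕜} (hU : IsOpen U)
    {α : 𝕜} {w ψ0 : 𝕜 → 𝕜} (hw : DifferentiableOn 𝕜 w U) (hψ0 : DifferentiableOn 𝕜 ψ0 U)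
    (hψ0' : DifferentiableOn 𝕜 (deriv ψ0) U) (hψ0_ne : ∀ z ∈ U, ψ0 z ≠ 0)
    (hL1 : ∀ z ∈ U, 2 * w z * deriv ψ0 z - deriv w z * ψ0 z - 4 * α * ψ0 z = 0)
    (hL2 : ∀ z ∈ U, deriv (deriv ψ0) z + (w z - 2 * z) * ψ0 z = 0)
    {ψ φ : ℕ → 𝕜 → 𝕜} (hψ_zero : ∀ z ∈ U, ψ 0 z = ψ0 z)
    (hφ_zero : ∀ z ∈ U, φ 0 z = w z / (2 * ψ0 z))
    (hψ_rec : ∀ n, ∀ z ∈ U, ψ (n + 1) z = deriv (ψ n) z +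
      w z / (2 * ψ0 z) * ∑ k ∈ Finset.range n, ψ k z * ψ (n - 1 - k) z)
    (hφ_rec : ∀ n, ∀ z ∈ U, φ (n + 1) z = deriv (φ n) z +
      ψ0 z * ∑ k ∈ Finset.range n, φ k z * φ (n - 1 - k) z)
    (N : ℤ) {τ : 𝕜 → 𝕜} (hτ : ∀ z ∈ U, τ z = signedHankelDet (ψ · z) (φ · z) N)
    (hτ_ne : ∀ z ∈ U, τ z ≠ 0) :
    IsP34Solution (α + N) U (fun z => w z +
      2 * (deriv (deriv τ) z * τ z - deriv τ z ^ 2) / τ z ^ 2) := by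
  have hpair : IsP34Pair α U (fun z => w z / (2 * ψ0 z)) ψ0 :=
    isP34Pair_of_linear_equations hU hw hψ0 hψ0' hψ0_ne hL1 hL2
  have hw_eq (z : 𝕜) (hz : z ∈ U) : w z = 2 * (w z / (2 * ψ0 z) * ψ0 z) := by
    have := hψ0_ne z hz
    field_simp
  cases N with
  | ofNat n =>
    rw [Int.ofNat_eq_natCast, Int.cast_natCast]
    refine (hpair.isP34Solution_hankelDet hU hψ_zero hψ_rec n hτ hτ_ne).congr hU ?_
    intro z hz
    simp only [← hw_eq z hz]
  | negSucc n =>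
    have hα : α + (Int.negSucc n : ℤ) = -(-α + (n + 1 : ℕ)) := by
      push_cast
      ring
    rw [hα]
    refine (hpair.symm.isP34Solution_hankelDet hU hφ_zero hφ_rec (n + 1) hτ
      hτ_ne).neg.congr hU ?_
    intro z hz
    simp only [mul_comm (ψ0 z), ← hw_eq z hz]

/-- If `w` solves P_XXXIV[α] on an open interval `I` and `ψ0` is a nowhere-vanishing
smooth function solving (L1) and (L2), then for any integer `N` with `τ_N` nowhere zero
on `I`, the function `W = w + 2 (log τ_N)''` solves P_XXXIV[α + N] on `I`. -/
theorem painleve34_determinant_formula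
    (I : Set ℝ) (hIopen : IsOpen I) (hIconn : I.OrdConnected)
    (α : ℝ) (w ψ0 : ℝ → ℝ)
    (hw_smooth : ContDiffOn ℝ (⊤ : ℕ∞) w I)
    (hw_P34 : ∀ z ∈ I,
      2 * w z * deriv (deriv w) z - (deriv w z) ^ 2 + 4 * (w z) ^ 3
        - 8 * z * (w z) ^ 2 + 16 * α ^ 2 = 0)
    (hψ0_smooth : ContDiffOn ℝ (⊤ : ℕ∞) ψ0 I)
    (hψ0_ne : ∀ z ∈ I, ψ0 z ≠ 0)
    (hL1 : ∀ z ∈ I, 2 * w z * deriv ψ0 z - deriv w z * ψ0 z - 4 * α * ψ0 z = 0)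
    (hL2 : ∀ z ∈ I, deriv (deriv ψ0) z + (w z - 2 * z) * ψ0 z = 0)
    (ψ φ : ℕ → ℝ → ℝ)
    (hψ_zero : ψ 0 = ψ0)
    (hφ_zero : ∀ z ∈ I, φ 0 z = w z / (2 * ψ0 z))
    (hψ_rec : ∀ n : ℕ, ∀ z ∈ I, ψ (n + 1) z =
      deriv (ψ n) z + (w z / (2 * ψ0 z)) *
        ∑ k ∈ Finset.range n, ψ k z * ψ (n - 1 - k) z)
    (hφ_rec : ∀ n : ℕ, ∀ z ∈ I, φ (n + 1) z =
      deriv (φ n) z + ψ0 z *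
        ∑ k ∈ Finset.range n, φ k z * φ (n - 1 - k) z)
    (N : ℤ)
    (hτ_ne : ∀ z ∈ I, hankelTau ψ φ N z ≠ 0)
    (W : ℝ → ℝ)
    (hW : W = fun z => w z +
      2 * (deriv (deriv (hankelTau ψ φ N)) z * hankelTau ψ φ N z
        - (deriv (hankelTau ψ φ N) z) ^ 2) / (hankelTau ψ φ N z) ^ 2) :
    ∀ z ∈ I,
      2 * W z * deriv (deriv W) z - (deriv W z) ^ 2 + 4 * (W z) ^ 3
        - 8 * z * (W z) ^ 2 + 16 * (α + (N : ℝ)) ^ 2 = 0 := by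
  subst hW
  have hψ0' : DifferentiableOn ℝ (deriv ψ0) I :=
    ((contDiffOn_infty_iff_deriv_of_isOpen hIopen).1 hψ0_smooth).2.differentiableOn (by simp)
  exact (painleve34_determinant_formula_general hIopen (hw_smooth.differentiableOn (by simp))
    (hψ0_smooth.differentiableOn (by simp)) hψ0' hψ0_ne hL1 hL2
    (fun z _ => congrFun hψ_zero z) hφ_zero hψ_rec hφ_rec N (fun _ _ => rfl) hτ_ne).equation
end

section
/- Let w be a smooth solution of P_XXXIV[α] on an open interval I ⊆ ℝ, and let ψ_0 be a nowhere-vanishing smooth function on I satisfying both (L1) and (L2) with this w and parameter α. Define the sequences ψ_n, φ_n and the Hankel determinants τ_N from w and ψ_0. Then for every integer N, the bilinear equation D_z² τ_{N+1}·τ_N + (w − 2z)·τ_{N+1}·τ_N = 0 holds identically on I. -/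
/-! Put `u = w / (2ψ_0)` and `v = ψ_0`. Then `w = 2uv`, and (L1) says that the Wronskian `uv' - u'v`
is constant, so with (L2) both functions solve `f'' = (2z - w) f`. This system is symmetric in `u`
and `v`, and exchanging them exchanges `ψ_n` and `φ_n`; so it is enough to treat `N ≥ 0`.

The convolution terms in the recursion for `ψ_n` are row and column operations on the Hankel matrix
up to explicit traces, so `τ_{n+1}'` is the Hankel minor on the rows `0, …, n - 1, n + 1`, and
`τ_{n+1}''` is, up to a multiple of `τ_{n+1}`, the sum of the minors on the rows
`0, …, n - 1, n + 2` and `0, …, n - 2, n, n + 1`. Moreover `ψ_n` satisfies a second-order recurrence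
in the index, with coefficients `2z - w`, `u` and `u'`; substituting it in the Hankel matrix with
all rows shifted by two expresses the difference of these two minors as a multiple of `τ_{n+1}`.
With the second derivatives so reduced, the bilinear equation is the three-term Plücker relation. -/

namespace P34Hankel

open Matrix Finset
open scoped ContDiff

section ShiftedConvolution

variable {R : Type*} [CommRing R]

/-- The convolution product delayed by one step: if `A` and `B` are the generating series of `a`
and `b`, this is the coefficient sequence of `X * A * B`. -/
def shiftedConv (a b : ℕ → R) (n : ℕ) : R :=
  ∑ k ∈ range n, a k * b (n - 1 - k)

@[simp]
theorem shiftedConv_zero (a b : ℕ → R) : shiftedConv a b 0 = 0 := by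
  simp only [shiftedConv, range_zero, sum_empty]

theorem shiftedConv_comm (a b : ℕ → R) (n : ℕ) : shiftedConv a b n = shiftedConv b a n := by
  rw [shiftedConv, ← sum_range_reflect]
  refine sum_congr rfl fun k hk => ?_
  rw [mem_range] at hk
  rw [mul_comm, show n - 1 - (n - 1 - k) = k by lia]

theorem shiftedConv_congr {a b c : ℕ → R} {n : ℕ} (h : ∀ k < n, b k = c k) :
    shiftedConv a b n = shiftedConv a c n := by
  refine sum_congr rfl fun k hk => ?_
  rw [mem_range] at hk
  rw [h _ (by lia)]

theorem shiftedConv_add_right (a b c : ℕ → R) (n : ℕ) :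
    shiftedConv a (b + c) n = shiftedConv a b n + shiftedConv a c n := by
  simp only [shiftedConv, Pi.add_apply, mul_add, sum_add_distrib]

theorem shiftedConv_sub_right (a b c : ℕ → R) (n : ℕ) :
    shiftedConv a (b - c) n = shiftedConv a b n - shiftedConv a c n := by
  simp only [shiftedConv, Pi.sub_apply, mul_sub, sum_sub_distrib]

theorem shiftedConv_smul_right (a b : ℕ → R) (r : R) (n : ℕ) :
    shiftedConv a (r • b) n = r * shiftedConv a b n := by
  simp only [shiftedConv, Pi.smul_apply, smul_eq_mul, mul_sum, mul_left_comm]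

theorem shiftedConv_succ (a b : ℕ → R) (n : ℕ) :
    shiftedConv a b (n + 1) = shiftedConv a (fun k => b (k + 1)) n + a n * b 0 := by
  rw [shiftedConv, sum_range_succ, Nat.add_sub_cancel, Nat.sub_self]
  congr 1
  refine sum_congr rfl fun k hk => ?_
  rw [mem_range] at hk
  simp only [show n - 1 - k + 1 = n - k by lia]

theorem shiftedConv_add (a b : ℕ → R) (p j : ℕ) :
    shiftedConv a b (p + j) =
      ∑ l ∈ range j, a (p + l) * b (j - 1 - l) + ∑ k ∈ range p, a (p - 1 - k) * b (k + j) := by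
  rw [shiftedConv, sum_range_add, add_comm, ← sum_range_reflect _ p]
  congr 1
  · refine sum_congr rfl fun l _ => ?_
    rw [show p + j - 1 - (p + l) = j - 1 - l by lia]
  · refine sum_congr rfl fun k hk => ?_
    rw [mem_range] at hk
    rw [show p + j - 1 - (p - 1 - k) = k + j by lia]

/-- If `A` is the generating series of `a`, then `2 * X * A * (X * (X * A)')` is the series
`X * (X * (X * A ^ 2))'`. -/
theorem two_mul_shiftedConv_lowering (a : ℕ → R) (n : ℕ) :
    2 * shiftedConv a (fun k => k * a (k - 1)) n = n * shiftedConv a a (n - 1) := by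
  rcases n with _ | n
  · simp only [shiftedConv_zero, Nat.cast_zero, zero_mul, mul_zero]
  have h_right : shiftedConv a (fun k => k * a (k - 1)) (n + 1) =
      ∑ k ∈ range n, ((n - k : ℕ) : R) * (a k * a (n - 1 - k)) := by
    rw [shiftedConv, sum_range_succ]
    simp only [Nat.add_sub_cancel, Nat.sub_self, Nat.cast_zero, zero_mul, mul_zero, add_zero]
    refine sum_congr rfl fun k _ => ?_
    rw [Nat.sub_right_comm]
    ring
  have h_left : shiftedConv (fun k => k * a (k - 1)) a (n + 1) =
      ∑ k ∈ range n, ((k + 1 : ℕ) : R) * (a k * a (n - 1 - k)) := by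
    rw [shiftedConv, sum_range_succ']
    simp only [Nat.add_sub_cancel, Nat.cast_zero, zero_mul, add_zero]
    refine sum_congr rfl fun k _ => ?_
    rw [show n - (k + 1) = n - 1 - k by lia]
    ring
  rw [two_mul]
  nth_rw 2 [shiftedConv_comm]
  rw [h_right, h_left, ← sum_add_distrib, Nat.add_sub_cancel, shiftedConv, mul_sum]
  refine sum_congr rfl fun k hk => ?_
  rw [mem_range] at hk
  rw [← add_mul, ← Nat.cast_add, show n - k + (k + 1) = n + 1 by lia]

end ShiftedConvolution

section Determinants

variable {R : Type*} [CommRing R]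

/-- The differential of the determinant at `M`, as a linear form in the direction. -/
def detVariation {ι : Type*} [Fintype ι] [DecidableEq ι] (M : Matrix ι ι R) :
    Matrix ι ι R →ₗ[R] R :=
  detRowAlternating.toMultilinearMap.linearDeriv M

theorem detVariation_apply {ι : Type*} [Fintype ι] [DecidableEq ι] (M X : Matrix ι ι R) :
    detVariation M X = ∑ i, (M.updateRow i (X i)).det :=
  MultilinearMap.linearDeriv_apply _ _ _

theorem detVariation_of {ι : Type*} [Fintype ι] [DecidableEq ι] (M : Matrix ι ι R)
    (v : ι → ι → R) : detVariation M (of v) = ∑ i, (M.updateRow i (v i)).det :=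
  detVariation_apply M v

theorem detVariation_mul {ι : Type*} [Fintype ι] [DecidableEq ι] (M X : Matrix ι ι R) :
    detVariation M (M * X) = X.trace * M.det := by
  have h_trace : detVariation M (M * X) = (M * X * M.adjugate).trace := by
    rw [detVariation_apply]
    refine sum_congr rfl fun i _ => ?_
    rw [← cramer_transpose_apply, cramer_eq_adjugate_mulVec, ← adjugate_transpose,
      mulVec_transpose]
    rfl
  rw [h_trace, trace_mul_comm, ← Matrix.mul_assoc, adjugate_mul, smul_mul, Matrix.one_mul,
    trace_smul, smul_eq_mul, mul_comm]

theorem detVariation_self {ι : Type*} [Fintype ι] [DecidableEq ι] (M : Matrix ι ι R) :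
    detVariation M M = Fintype.card ι * M.det := by
  simpa only [Matrix.mul_one, trace_one] using detVariation_mul M 1

theorem det_smul_eq_sum_det_updateRow {ι : Type*} [Fintype ι] [DecidableEq ι] (M : Matrix ι ι R)
    (v : ι → R) : M.det • v = ∑ i, (M.updateRow i v).det • M i := by
  rw [← det_transpose, ← mulVec_cramer, mulVec_eq_sum]
  simp only [cramer_transpose_apply, op_smul_eq_smul, transpose_transpose]

theorem det_updateRow_sum_smul {ι κ : Type*} [Fintype ι] [DecidableEq ι] (M : Matrix ι ι R) (i : ι)
    (s : Finset κ) (c : κ → R) (v : κ → ι → R) :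
    (M.updateRow i (∑ k ∈ s, c k • v k)).det = ∑ k ∈ s, c k * (M.updateRow i (v k)).det := by
  refine (detRowAlternating.toMultilinearMap.map_update_sum s i _ M).trans ?_
  exact sum_congr rfl fun k _ => det_updateRow_smul M i (c k) (v k)

theorem det_snoc_single {n : ℕ} (A : Fin n → Fin (n + 1) → R) :
    det (Fin.snoc A (Pi.single (Fin.last n) 1)) = det fun i j : Fin n => A i j.castSucc := by
  refine (det_succ_row _ (Fin.last n)).trans ?_
  rw [Fin.sum_univ_castSucc]
  simp only [Fin.snoc_last, Pi.single_eq_same, Pi.single_eq_of_ne (Fin.castSucc_ne_last _),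
    mul_zero, zero_mul, sum_const_zero, zero_add, mul_one, Fin.succAbove_last,
    Even.neg_one_pow ⟨_, rfl⟩, one_mul]
  refine congrArg det ?_
  funext i j
  exact congrFun (Fin.snoc_castSucc (α := fun _ => Fin (n + 1) → R) _ _ i) j.castSucc

theorem det_snoc_snoc_swap {m : ℕ} (A : Fin m → Fin (m + 2) → R) (p q : Fin (m + 2) → R) :
    det (Fin.snoc (Fin.snoc A q) p) = -det (Fin.snoc (Fin.snoc A p) q) := by
  have h_swap : (Fin.snoc (Fin.snoc A q) p : Fin (m + 2) → Fin (m + 2) → R) =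
      Fin.snoc (Fin.snoc A p) q ∘ Equiv.swap (Fin.last m).castSucc (Fin.last (m + 1)) := by
    funext i
    refine i.lastCases ?_ fun i => i.lastCases ?_ fun i => ?_
    · simp only [Fin.snoc_last, Function.comp_apply, Equiv.swap_apply_right, Fin.snoc_castSucc]
    · simp only [Fin.snoc_last, Function.comp_apply, Equiv.swap_apply_left, Fin.snoc_castSucc]
    · rw [Function.comp_apply, Equiv.swap_apply_of_ne_of_ne
        (Fin.castSucc_injective _ |>.ne i.castSucc_ne_last) (Fin.castSucc_ne_last _)]
      simp only [Fin.snoc_castSucc]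
  have h := det_permute (Equiv.swap (Fin.last m).castSucc (Fin.last (m + 1)))
    (Fin.snoc (Fin.snoc A p) q : Fin (m + 2) → Fin (m + 2) → R)
  rw [Equiv.Perm.sign_swap (Fin.castSucc_ne_last _), Units.val_neg, Units.val_one, Int.cast_neg,
    Int.cast_one, neg_one_mul] at h
  rw [h_swap, ← h]
  rfl

theorem det_snoc_snoc_plucker {m : ℕ} (A : Fin m → Fin (m + 2) → R) (p q r s : Fin (m + 2) → R) :
    det (Fin.snoc (Fin.snoc A p) q) * det (Fin.snoc (Fin.snoc A r) s) -
      det (Fin.snoc (Fin.snoc A p) r) * det (Fin.snoc (Fin.snoc A q) s) +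
      det (Fin.snoc (Fin.snoc A q) r) * det (Fin.snoc (Fin.snoc A p) s) = 0 := by
  have update_fst (x y z) : Function.update (Fin.snoc (Fin.snoc A x) y) (Fin.last m).castSucc z =
      (Fin.snoc (Fin.snoc A z) y : Fin (m + 2) → Fin (m + 2) → R) := by
    rw [← Fin.snoc_update, Fin.update_snoc_last]
  let L : (Fin (m + 2) → R) →ₗ[R] R := detRowAlternating.toMultilinearMap.toLinearMap
    (Fin.snoc (Fin.snoc A 0) s) (Fin.last m).castSucc
  have L_apply (v) : L v = det (Fin.snoc (Fin.snoc A v) s) :=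
    congrArg detRowAlternating (update_fst 0 s v)
  have L_common (i : Fin m) : L (A i) = 0 := by
    rw [L_apply]
    refine det_zero_of_row_eq (Fin.castSucc_injective _ |>.ne i.castSucc_ne_last) ?_
    simp only [Fin.snoc_castSucc, Fin.snoc_last]
  have h := congrArg L (det_smul_eq_sum_det_updateRow (Fin.snoc (Fin.snoc A p) q) r)
  simp only [Fin.sum_univ_castSucc, updateRow, update_fst, Fin.update_snoc_last, Fin.snoc_castSucc,
    Fin.snoc_last, map_add, map_sum, map_smul, L_common, smul_eq_mul, mul_zero, sum_const_zero,
    zero_add] at h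
  rw [L_apply, L_apply, L_apply] at h
  change _ = det (Fin.snoc (Fin.snoc A r) q) * _ + det (Fin.snoc (Fin.snoc A p) r) * _ at h
  rw [det_snoc_snoc_swap A q r] at h
  linear_combination h

end Determinants

section HankelMinors

/-- The rows of index `f i` and the first `n` columns of the infinite Hankel matrix of `a`. -/
def hankelMatrix {α : Type*} (a : ℕ → α) {n : ℕ} (f : Fin n → ℕ) : Matrix (Fin n) (Fin n) α :=
  of fun i j => a (f i + j)

theorem hankelMatrix_updateRow {α : Type*} (a : ℕ → α) {n : ℕ} (f : Fin n → ℕ) (i : Fin n)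
    (k : ℕ) : (hankelMatrix a f).updateRow i (fun j => a (k + j)) =
      hankelMatrix a (Function.update f i k) := by
  ext i' j
  rcases eq_or_ne i' i with rfl | h
  · simp only [updateRow_self, hankelMatrix, of_apply, Function.update_self]
  · simp only [updateRow_ne h, hankelMatrix, of_apply, Function.update_of_ne h]

theorem snoc_val_self (n : ℕ) : (Fin.snoc Fin.val n : Fin (n + 1) → ℕ) = Fin.val := by
  funext i
  refine i.lastCases ?_ fun i => ?_
  · rw [Fin.snoc_last, Fin.val_last]
  · rw [Fin.snoc_castSucc, Fin.val_castSucc]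

variable {R : Type*} [CommRing R]

/-- The minor on the rows of index `f i` and the first `n` columns of the infinite Hankel matrix
of `a`. -/
def hankelMinor (a : ℕ → R) {n : ℕ} (f : Fin n → ℕ) : R :=
  (hankelMatrix a f).det

/-- The determinant of the leading `n × n` block of the infinite Hankel matrix of `a`. -/
def hankelDet (a : ℕ → R) (n : ℕ) : R :=
  hankelMinor a (Fin.val : Fin n → ℕ)

/-- The minor on the rows `0, …, n - 1, p` of the infinite Hankel matrix of `a`. -/
def hankelMinorSnoc (a : ℕ → R) (n p : ℕ) : R :=
  hankelMinor a (Fin.snoc Fin.val p : Fin (n + 1) → ℕ)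

/-- The minor on the rows `0, …, m - 1, p, q` of the infinite Hankel matrix of `a`. -/
def hankelMinorSnocSnoc (a : ℕ → R) (m p q : ℕ) : R :=
  hankelMinor a (Fin.snoc (Fin.snoc Fin.val p : Fin (m + 1) → ℕ) q : Fin (m + 2) → ℕ)

variable (a : ℕ → R)

theorem hankelDet_zero : hankelDet a 0 = 1 :=
  det_isEmpty

theorem hankelMinorSnoc_zero (p : ℕ) : hankelMinorSnoc a 0 p = a p :=
  (det_fin_one _).trans rfl

theorem hankelMinorSnoc_self (n : ℕ) : hankelMinorSnoc a n n = hankelDet a (n + 1) := by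
  rw [hankelMinorSnoc, snoc_val_self, hankelDet]

theorem hankelMinorSnocSnoc_self (m p : ℕ) :
    hankelMinorSnocSnoc a m m p = hankelMinorSnoc a (m + 1) p := by
  rw [hankelMinorSnocSnoc, snoc_val_self, hankelMinorSnoc]

theorem hankelMinorSnocSnoc_eq_det (m p q : ℕ) :
    hankelMinorSnocSnoc a m p q =
      det (Fin.snoc (Fin.snoc (fun i j => a (i + j)) fun j => a (p + j)) fun j => a (q + j) :
        Fin (m + 2) → Fin (m + 2) → R) := by
  refine congrArg det ?_
  funext i j
  refine i.lastCases ?_ fun i => i.lastCases ?_ fun i => ?_ <;>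
    simp only [hankelMatrix, of_apply, Fin.snoc_last, Fin.snoc_castSucc]

theorem hankelMinorSnoc_eq_det (m p : ℕ) :
    hankelMinorSnoc a m p =
      det (Fin.snoc (Fin.snoc (fun i j => a (i + j)) fun j => a (p + j))
        (Pi.single (Fin.last (m + 1)) 1) : Fin (m + 2) → Fin (m + 2) → R) := by
  refine Eq.trans (congrArg det ?_) (det_snoc_single _).symm
  funext i j
  refine i.lastCases ?_ fun i => ?_ <;>
    simp only [hankelMatrix, of_apply, Fin.snoc_last, Fin.snoc_castSucc, Fin.val_castSucc]

theorem hankelMinorSnocSnoc_swap (m p q : ℕ) :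
    hankelMinorSnocSnoc a m q p = -hankelMinorSnocSnoc a m p q := by
  simp only [hankelMinorSnocSnoc_eq_det]
  exact det_snoc_snoc_swap _ _ _

theorem hankelMinor_plucker (m p q r : ℕ) :
    hankelMinorSnocSnoc a m p q * hankelMinorSnoc a m r -
      hankelMinorSnocSnoc a m p r * hankelMinorSnoc a m q +
      hankelMinorSnocSnoc a m q r * hankelMinorSnoc a m p = 0 := by
  simp only [hankelMinorSnocSnoc_eq_det, hankelMinorSnoc_eq_det]
  exact det_snoc_snoc_plucker _ _ _ _ _

theorem hankelMinor_update_eq_zero {n : ℕ} {f : Fin n → ℕ} {i j : Fin n} (hij : i ≠ j) :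
    hankelMinor a (Function.update f i (f j)) = 0 := by
  refine det_zero_of_row_eq hij ?_
  funext k
  simp only [hankelMatrix, of_apply, Function.update_self, Function.update_of_ne hij.symm]

theorem detVariation_hankelMatrix {n : ℕ} (f g : Fin n → ℕ) :
    detVariation (hankelMatrix a f) (hankelMatrix a g) =
      ∑ i, hankelMinor a (Function.update f i (g i)) := by
  rw [detVariation_apply]
  refine sum_congr rfl fun i _ => ?_
  rw [hankelMinor, ← hankelMatrix_updateRow]
  rfl

theorem detVariation_hankelMatrix_val_shift_one (n : ℕ) :
    detVariation (hankelMatrix a Fin.val) (hankelMatrix a fun i : Fin (n + 1) => i + 1) =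
      hankelMinorSnoc a n (n + 1) := by
  have h_common (i : Fin n) : hankelMinor a (Function.update Fin.val i.castSucc (i + 1)) = 0 :=
    hankelMinor_update_eq_zero a (j := i.succ) Fin.castSucc_lt_succ.ne
  rw [detVariation_hankelMatrix, Fin.sum_univ_castSucc]
  simp only [Fin.val_castSucc, h_common, sum_const_zero, zero_add, Fin.val_last]
  rw [← snoc_val_self, Fin.update_snoc_last, hankelMinorSnoc]

theorem detVariation_hankelMatrix_val_shift_two (m : ℕ) :
    detVariation (hankelMatrix a Fin.val) (hankelMatrix a fun i : Fin (m + 2) => i + 2) =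
      hankelMinorSnoc a (m + 1) (m + 3) - hankelMinorSnocSnoc a m (m + 1) (m + 2) := by
  have h_common (i : Fin m) :
      hankelMinor a (Function.update Fin.val i.castSucc.castSucc (i + 2)) = 0 :=
    hankelMinor_update_eq_zero a (j := i.succ.succ) (by
      rw [Ne, Fin.ext_iff, Fin.val_castSucc, Fin.val_castSucc, Fin.val_succ, Fin.val_succ]
      lia)
  have h_fst : hankelMinor a (Function.update Fin.val (Fin.last m).castSucc (m + 2)) =
      -hankelMinorSnocSnoc a m (m + 1) (m + 2) := by
    rw [← hankelMinorSnocSnoc_swap, ← snoc_val_self (m + 1), ← Fin.snoc_update, ← snoc_val_self m,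
      Fin.update_snoc_last, hankelMinorSnocSnoc]
  have h_snd : hankelMinor a (Function.update Fin.val (Fin.last (m + 1)) (m + 1 + 2)) =
      hankelMinorSnoc a (m + 1) (m + 3) := by
    rw [← snoc_val_self, Fin.update_snoc_last, hankelMinorSnoc]
  rw [detVariation_hankelMatrix, Fin.sum_univ_castSucc, Fin.sum_univ_castSucc]
  simp only [Fin.val_castSucc, h_common, sum_const_zero, zero_add, Fin.val_last, h_fst, h_snd]
  ring

theorem detVariation_hankelMatrix_snoc_shift_one (m : ℕ) (f : Fin (m + 2) → ℕ)
    (hf : f = Fin.snoc (Fin.val : Fin (m + 1) → ℕ) (m + 2)) :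
    detVariation (hankelMatrix a f) (hankelMatrix a fun i => f i + 1) =
      hankelMinorSnoc a (m + 1) (m + 3) + hankelMinorSnocSnoc a m (m + 1) (m + 2) := by
  have f_common (i : Fin m) : f i.castSucc.castSucc = i := by
    rw [hf, Fin.snoc_castSucc, Fin.val_castSucc]
  have f_fst : f (Fin.last m).castSucc = m := by rw [hf, Fin.snoc_castSucc, Fin.val_last]
  have f_snd : f (Fin.last (m + 1)) = m + 2 := by rw [hf, Fin.snoc_last]
  have h_common (i : Fin m) :
      hankelMinor a (Function.update f i.castSucc.castSucc (i + 1)) = 0 := by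
    have h_next : f i.succ.castSucc = i + 1 := by rw [hf, Fin.snoc_castSucc, Fin.val_succ]
    rw [← h_next]
    exact hankelMinor_update_eq_zero a (Fin.castSucc_injective _ |>.ne Fin.castSucc_lt_succ.ne)
  rw [detVariation_hankelMatrix, Fin.sum_univ_castSucc, Fin.sum_univ_castSucc]
  simp only [f_common, f_fst, f_snd, h_common, sum_const_zero, zero_add]
  rw [hf, ← Fin.snoc_update, Fin.update_snoc_last, ← snoc_val_self m, Fin.update_snoc_last,
    snoc_val_self m, add_comm]
  rfl

end HankelMinors

section HankelConvolution

variable {R : Type*} [CommRing R] (a : ℕ → R)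

/-- The upper triangular Toeplitz matrix whose `j`-th column is `a (j + s - 1), a (j + s - 2), …`,
ending with `a 0` on row `j + s - 1`. For `s ≤ 1` right multiplication by it performs the part of a
shifted convolution that acts on the columns of a Hankel matrix. -/
def upperToeplitz (n s : ℕ) : Matrix (Fin n) (Fin n) R :=
  of fun l j => if (l : ℕ) < j + s then a (j + s - 1 - l) else 0

theorem trace_upperToeplitz (n : ℕ) {s : ℕ} (hs : s ≤ 1) :
    (upperToeplitz a n s).trace = n * (s * a 0) := by
  interval_cases s <;>
    simp [upperToeplitz, trace]

theorem hankelMatrix_mul_upperToeplitz {n s : ℕ} (hs : s ≤ 1) (f : Fin n → ℕ) (i j : Fin n) :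
    (hankelMatrix a f * upperToeplitz a n s) i j =
      ∑ l ∈ range (j + s), a (f i + l) * a (j + s - 1 - l) := by
  simp only [mul_apply, hankelMatrix, upperToeplitz, of_apply, mul_ite, mul_zero]
  rw [Fin.sum_univ_eq_sum_range
    (fun l => if l < (j : ℕ) + s then a (f i + l) * a (j + s - 1 - l) else 0), ← sum_filter]
  refine sum_congr ?_ fun _ _ => rfl
  ext l
  rw [mem_filter, mem_range, mem_range]
  lia

theorem detVariation_hankelMatrix_shiftedConv {n s : ℕ} (hs : s ≤ 1) (f : Fin n → ℕ) :
    detVariation (hankelMatrix a f) (hankelMatrix (shiftedConv a a) fun i => f i + s) =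
      n * (s * a 0) * hankelMinor a f +
        ∑ i, ∑ k ∈ range (f i), a (f i - 1 - k) * hankelMinor a (Function.update f i (k + s)) := by
  have h_split : (hankelMatrix (shiftedConv a a) fun i => f i + s) =
      hankelMatrix a f * upperToeplitz a n s +
        of fun i => ∑ k ∈ range (f i), a (f i - 1 - k) • fun j : Fin n => a (k + s + j) := by
    ext i j
    rw [Matrix.add_apply, hankelMatrix_mul_upperToeplitz a hs, of_apply, Finset.sum_apply]
    simp only [hankelMatrix, of_apply, Pi.smul_apply, smul_eq_mul, add_assoc, add_comm s,
      shiftedConv_add]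
  rw [h_split, map_add, detVariation_mul, trace_upperToeplitz a n hs, detVariation_of]
  simp only [det_updateRow_sum_smul, hankelMatrix_updateRow, hankelMinor]

theorem detVariation_hankelMatrix_shiftedConv_val (n : ℕ) :
    detVariation (hankelMatrix a Fin.val)
      (hankelMatrix (shiftedConv a a) (Fin.val : Fin n → ℕ)) = 0 := by
  have h := detVariation_hankelMatrix_shiftedConv a zero_le_one (Fin.val : Fin n → ℕ)
  simp only [Nat.cast_zero, zero_mul, mul_zero, zero_add, add_zero] at h
  rw [h]
  refine sum_eq_zero fun i _ => sum_eq_zero fun k hk => ?_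
  rw [mem_range] at hk
  have h_ne : i ≠ ⟨k, hk.trans i.isLt⟩ := Fin.ne_of_gt hk
  rw [hankelMinor_update_eq_zero a (f := Fin.val) h_ne, mul_zero]

theorem detVariation_hankelMatrix_shiftedConv_val_succ (n : ℕ) :
    detVariation (hankelMatrix a Fin.val)
      (hankelMatrix (shiftedConv a a) fun i : Fin (n + 1) => i + 1) =
        (2 * n + 1) * a 0 * hankelDet a (n + 1) := by
  have h_row (i : Fin n) : ∑ k ∈ range i.succ, a (i.succ - 1 - k) *
      hankelMinor a (Function.update Fin.val i.succ (k + 1)) = a 0 * hankelDet a (n + 1) := by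
    rw [Fin.val_succ, sum_range_succ, sum_eq_zero, Nat.add_sub_cancel, Nat.sub_self, zero_add,
      ← Fin.val_succ, Function.update_eq_self, hankelDet]
    intro k hk
    rw [mem_range] at hk
    have h_ne : i.succ ≠ ⟨k + 1, by lia⟩ := Fin.ne_of_gt (Nat.succ_lt_succ hk)
    rw [hankelMinor_update_eq_zero a (f := Fin.val) h_ne, mul_zero]
  rw [detVariation_hankelMatrix_shiftedConv a le_rfl Fin.val, Fin.sum_univ_succ,
    sum_congr rfl fun i _ => h_row i, Fin.val_zero, range_zero, sum_empty, sum_const,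
    card_univ, Fintype.card_fin, nsmul_eq_mul, ← hankelDet]
  push_cast
  ring

theorem detVariation_hankelMatrix_shiftedConv_snoc (n : ℕ) (f : Fin (n + 1) → ℕ)
    (hf : f = Fin.snoc (Fin.val : Fin n → ℕ) (n + 1)) :
    detVariation (hankelMatrix a f) (hankelMatrix (shiftedConv a a) f) =
      a 0 * hankelDet a (n + 1) := by
  have f_common (i : Fin n) : f i.castSucc = i := by rw [hf, Fin.snoc_castSucc]
  have f_last : f (Fin.last n) = n + 1 := by rw [hf, Fin.snoc_last]
  have h_zero {i : Fin (n + 1)} {k : ℕ} (hk : k < n) (hki : k ≠ i) :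
      hankelMinor a (Function.update f i k) = 0 := by
    have h_ne : i ≠ (⟨k, hk⟩ : Fin n).castSucc := Fin.ne_of_val_ne hki.symm
    simpa only [f_common] using hankelMinor_update_eq_zero a (f := f) h_ne
  have h_common (i : Fin n) : ∑ k ∈ range i, a (i - 1 - k) *
      hankelMinor a (Function.update f i.castSucc k) = 0 := by
    refine sum_eq_zero fun k hk => ?_
    rw [mem_range] at hk
    rw [h_zero (hk.trans i.isLt) hk.ne, mul_zero]
  have h_last : ∑ k ∈ range (n + 1), a (n + 1 - 1 - k) *
      hankelMinor a (Function.update f (Fin.last n) k) = a 0 * hankelDet a (n + 1) := by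
    rw [sum_range_succ, sum_eq_zero fun k hk => ?_, zero_add, Nat.add_sub_cancel, Nat.sub_self,
      hf, Fin.update_snoc_last, snoc_val_self, hankelDet]
    rw [mem_range] at hk
    rw [h_zero hk hk.ne, mul_zero]
  have h := detVariation_hankelMatrix_shiftedConv a zero_le_one f
  simp only [Nat.cast_zero, zero_mul, mul_zero, zero_add, add_zero] at h
  rw [h, Fin.sum_univ_castSucc]
  simp only [f_common, f_last, h_common, h_last, sum_const_zero, zero_add]

/-- The matrix of differentiation on polynomials of degree less than `n`, in the monomial basis.
Right multiplication by it performs the part of `k ↦ k * a (k - 1)` that acts on the columns of a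
Hankel matrix. -/
def weightedShift (R : Type*) [CommRing R] (n : ℕ) : Matrix (Fin n) (Fin n) R :=
  of fun l j => if (l : ℕ) + 1 = j then (j : R) else 0

theorem trace_weightedShift (n : ℕ) : (weightedShift R n).trace = 0 := by
  simp [weightedShift, trace]

theorem hankelMatrix_mul_weightedShift {n : ℕ} (f : Fin n → ℕ) (i j : Fin n) :
    (hankelMatrix a f * weightedShift R n) i j = j * a (f i + j - 1) := by
  simp only [mul_apply, hankelMatrix, weightedShift, of_apply, mul_ite, mul_zero]
  rw [Fin.sum_univ_eq_sum_range (fun l => if l + 1 = (j : ℕ) then a (f i + l) * j else 0)]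
  rcases j with ⟨_ | j, hj⟩
  · simp
  · have h_mem : j ∈ range n := mem_range.mpr (by lia)
    simp only [Nat.add_right_cancel_iff, sum_ite_eq', h_mem, if_true, ← Nat.add_assoc,
      Nat.add_sub_cancel, mul_comm]

theorem detVariation_hankelMatrix_lowering (n : ℕ) :
    detVariation (hankelMatrix a Fin.val)
      (hankelMatrix (fun k => k * a (k - 1)) (Fin.val : Fin n → ℕ)) = 0 := by
  have h_split : hankelMatrix (fun k => k * a (k - 1)) (Fin.val : Fin n → ℕ) =
      (of fun i : Fin n => (i : R) • fun j : Fin n => a (i - 1 + j)) +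
        hankelMatrix a Fin.val * weightedShift R n := by
    ext i j
    rw [Matrix.add_apply, hankelMatrix_mul_weightedShift]
    rcases i with ⟨_ | i, hi⟩
    · simp [hankelMatrix]
    · simp only [hankelMatrix, of_apply, Pi.smul_apply, smul_eq_mul, Nat.add_sub_cancel,
        show i + 1 + (j : ℕ) - 1 = i + j by lia]
      push_cast
      ring
  rw [h_split, map_add, detVariation_mul, trace_weightedShift, zero_mul, add_zero,
    detVariation_of]
  refine sum_eq_zero fun i _ => ?_
  rw [det_updateRow_smul, hankelMatrix_updateRow, ← hankelMinor]
  rcases i with ⟨_ | i, hi⟩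
  · rw [Nat.cast_zero, zero_mul]
  · have h_ne : (⟨i + 1, hi⟩ : Fin n) ≠ ⟨i, by lia⟩ := Fin.ne_of_val_ne i.succ_ne_self
    rw [Nat.add_sub_cancel, hankelMinor_update_eq_zero a (f := Fin.val) h_ne, mul_zero]

/-- The second-order recurrence at the index `k`; it links the sequences `ψ_n` to Painlevé XXXIV
when `c = 2z - w`, `u = w / (2ψ_0)` and `u'` is the derivative of `u`. -/
def SecondOrderRec (c u u' : R) (k : ℕ) : Prop :=
  a (k + 2) = c * a k + 2 * (k * a (k - 1)) + u * shiftedConv a a (k + 1) - u' * shiftedConv a a k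

variable {a} {c u u' : R}

theorem shiftedConv_self_of_secondOrderRec {n : ℕ} (h : ∀ k < n, SecondOrderRec a c u u' k) :
    shiftedConv a a (n + 2) = a n * a 1 + a (n + 1) * a 0 + c * shiftedConv a a n +
      n * shiftedConv a a (n - 1) + u * shiftedConv a (shiftedConv a a) (n + 1) -
        u' * shiftedConv a (shiftedConv a a) n := by
  have h_congr : shiftedConv a (fun k => a (k + 2)) n =
      shiftedConv a (c • a + (2 : R) • (fun k => k * a (k - 1)) +
        u • (fun k => shiftedConv a a (k + 1)) - u' • shiftedConv a a) n :=
    shiftedConv_congr h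
  simp only [shiftedConv_sub_right, shiftedConv_add_right, shiftedConv_smul_right,
    two_mul_shiftedConv_lowering] at h_congr
  rw [shiftedConv_succ, shiftedConv_succ a (fun k => a (k + 1)), h_congr,
    shiftedConv_succ a (shiftedConv a a), shiftedConv_zero]
  ring

theorem detVariation_shift_two_of_secondOrderRec (h : ∀ k, SecondOrderRec a c u u' k) (n : ℕ) :
    detVariation (hankelMatrix a Fin.val) (hankelMatrix a fun i : Fin (n + 1) => i + 2) =
      ((n + 1) * c + (2 * n + 1) * (u * a 0)) * hankelDet a (n + 1) := by
  have h_rec : (hankelMatrix a fun i : Fin (n + 1) => i + 2) =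
      c • hankelMatrix a Fin.val + (2 : R) • hankelMatrix (fun k => k * a (k - 1)) Fin.val +
        u • hankelMatrix (shiftedConv a a) (fun i => i + 1) -
          u' • hankelMatrix (shiftedConv a a) Fin.val := by
    ext i j
    simp only [hankelMatrix, of_apply, Matrix.add_apply, Matrix.sub_apply, Matrix.smul_apply,
      smul_eq_mul, add_right_comm _ _ (j : ℕ)]
    exact h (i + j)
  rw [h_rec, map_sub, map_add, map_add, map_smul, map_smul, map_smul, map_smul,
    detVariation_self, detVariation_hankelMatrix_lowering,
    detVariation_hankelMatrix_shiftedConv_val, detVariation_hankelMatrix_shiftedConv_val_succ,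
    Fintype.card_fin, ← hankelMinor, ← hankelDet]
  simp only [smul_eq_mul]
  push_cast
  ring

theorem hankelMinorSnoc_sub_of_secondOrderRec (h : ∀ k, SecondOrderRec a c u u' k) (m : ℕ) :
    hankelMinorSnoc a (m + 1) (m + 3) - hankelMinorSnocSnoc a m (m + 1) (m + 2) =
      ((m + 2) * c + (2 * m + 3) * (u * a 0)) * hankelDet a (m + 2) := by
  rw [← detVariation_hankelMatrix_val_shift_two, detVariation_shift_two_of_secondOrderRec h]
  push_cast
  ring

end HankelConvolution

section Differentiation

variable {𝕜 : Type*} [NontriviallyNormedField 𝕜]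

theorem hasDerivAt_det {ι : Type*} [Fintype ι] [DecidableEq ι] {M : 𝕜 → Matrix ι ι 𝕜}
    {M' : Matrix ι ι 𝕜} {z : 𝕜} (hM : ∀ i j, HasDerivAt (fun y => M y i j) (M' i j) z) :
    HasDerivAt (fun y => (M y).det) (detVariation (M z) M') z := by
  let D : ContinuousMultilinearMap 𝕜 (fun _ : ι => ι → 𝕜) 𝕜 :=
    ⟨detRowAlternating.toMultilinearMap, continuous_id.matrix_det⟩
  have hM' : HasDerivAt (fun y i => M y i) (fun i => M' i) z :=
    hasDerivAt_pi.mpr fun i => hasDerivAt_pi.mpr fun j => hM i j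
  refine ((D.hasFDerivAt (M z)).comp_hasDerivAt z hM').congr_deriv ?_
  exact (D.linearDeriv_apply _ _).trans (detVariation_apply _ _).symm

theorem hasDerivAt_shiftedConv_self {a : ℕ → 𝕜 → 𝕜} {a' : ℕ → 𝕜} {z : 𝕜}
    (ha : ∀ n, HasDerivAt (a n) (a' n) z) (n : ℕ) :
    HasDerivAt (fun y => shiftedConv (a · y) (a · y) n) (2 * shiftedConv (a · z) a' n) z := by
  refine (HasDerivAt.fun_sum fun k _ => (ha k).mul (ha (n - 1 - k))).congr_deriv ?_
  rw [sum_add_distrib, two_mul]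
  nth_rw 1 [shiftedConv_comm]
  rfl

/-- The operator `D_z²` of Hirota applied to the pair `g · f`. -/
noncomputable def hirotaDSq (g f : 𝕜 → 𝕜) (z : 𝕜) : 𝕜 :=
  deriv (deriv g) z * f z - 2 * deriv g z * deriv f z + g z * deriv (deriv f) z

theorem hirotaDSq_comm (g f : 𝕜 → 𝕜) (z : 𝕜) : hirotaDSq g f z = hirotaDSq f g z := by
  rw [hirotaDSq, hirotaDSq]
  ring

end Differentiation

section CoupledSystem

variable {𝕜 : Type*} [NontriviallyNormedField 𝕜]

/-- Painlevé XXXIV for `w = 2uv` together with its linear problem, written as a system that is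
symmetric in `u` and `v`. -/
structure CoupledPair (I : Set 𝕜) (u v : 𝕜 → 𝕜) : Prop where
  contDiffOn_left : ContDiffOn 𝕜 ∞ u I
  contDiffOn_right : ContDiffOn 𝕜 ∞ v I
  deriv_deriv_left : ∀ z ∈ I, deriv (deriv u) z = (2 * z - 2 * u z * v z) * u z
  deriv_deriv_right : ∀ z ∈ I, deriv (deriv v) z = (2 * z - 2 * u z * v z) * v z

/-- The sequence of functions `a n` generated from `v` by the quadratic recursion with
coefficient `u`. With `u = w / (2ψ_0)` and `v = ψ_0` this is `ψ_n`; exchanging `u` and `v` it is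
`φ_n`. -/
structure IsHankelSeq (I : Set 𝕜) (u v : 𝕜 → 𝕜) (a : ℕ → 𝕜 → 𝕜) : Prop where
  zero : ∀ z ∈ I, a 0 z = v z
  succ : ∀ n, ∀ z ∈ I, a (n + 1) z = deriv (a n) z + u z * shiftedConv (a · z) (a · z) n

variable {I : Set 𝕜} {u v : 𝕜 → 𝕜} {a : ℕ → 𝕜 → 𝕜} {z : 𝕜}

theorem CoupledPair.symm (h : CoupledPair I u v) : CoupledPair I v u where
  contDiffOn_left := h.contDiffOn_right
  contDiffOn_right := h.contDiffOn_left
  deriv_deriv_left z hz := by rw [h.deriv_deriv_right z hz, mul_right_comm]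
  deriv_deriv_right z hz := by rw [h.deriv_deriv_left z hz, mul_right_comm]

theorem hasDerivAt_of_contDiffOn {f : 𝕜 → 𝕜} (hI : IsOpen I) (hf : ContDiffOn 𝕜 ∞ f I)
    (hz : z ∈ I) : HasDerivAt f (deriv f z) z :=
  ((hf.differentiableOn (by simp)).differentiableAt (hI.mem_nhds hz)).hasDerivAt

theorem hasDerivAt_deriv_of_contDiffOn {f : 𝕜 → 𝕜} (hI : IsOpen I) (hf : ContDiffOn 𝕜 ∞ f I)
    (hz : z ∈ I) : HasDerivAt (deriv f) (deriv (deriv f) z) z :=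
  hasDerivAt_of_contDiffOn hI (hf.deriv_of_isOpen hI (by simp)) hz

theorem deriv_eq_of_eqOn {f g : 𝕜 → 𝕜} (hI : IsOpen I) (h : ∀ y ∈ I, f y = g y) (hz : z ∈ I) :
    deriv f z = deriv g z :=
  (Set.EqOn.eventuallyEq_of_mem h (hI.mem_nhds hz)).deriv_eq

theorem IsHankelSeq.contDiffOn (ha : IsHankelSeq I u v a) (hI : IsOpen I)
    (hu : ContDiffOn 𝕜 ∞ u I) (hv : ContDiffOn 𝕜 ∞ v I) (n : ℕ) : ContDiffOn 𝕜 ∞ (a n) I := by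
  induction n using Nat.strong_induction_on with
  | _ n ih =>
    rcases n with _ | n
    · exact hv.congr ha.zero
    · have h_conv : ContDiffOn 𝕜 ∞ (fun z => shiftedConv (a · z) (a · z) n) I := by
        refine ContDiffOn.sum fun k hk => ?_
        rw [mem_range] at hk
        exact (ih k (by lia)).mul (ih (n - 1 - k) (by lia))
      exact (((ih n n.lt_succ_self).deriv_of_isOpen hI (by simp)).add (hu.mul h_conv)).congr
        (ha.succ n)

theorem IsHankelSeq.hasDerivAt (ha : IsHankelSeq I u v a) (hI : IsOpen I)
    (h : CoupledPair I u v) (hz : z ∈ I) (n : ℕ) :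
    HasDerivAt (a n) (a (n + 1) z - u z * shiftedConv (a · z) (a · z) n) z := by
  rw [ha.succ n z hz, add_sub_cancel_right]
  exact hasDerivAt_of_contDiffOn hI (ha.contDiffOn hI h.contDiffOn_left h.contDiffOn_right n) hz

theorem IsHankelSeq.hasDerivAt_shiftedConv (ha : IsHankelSeq I u v a) (hI : IsOpen I)
    (h : CoupledPair I u v) (hz : z ∈ I) (n : ℕ) :
    HasDerivAt (fun y => shiftedConv (a · y) (a · y) n)
      (2 * (shiftedConv (a · z) (a · z) (n + 1) - a n z * a 0 z -
        u z * shiftedConv (a · z) (shiftedConv (a · z) (a · z)) n)) z := by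
  refine (hasDerivAt_shiftedConv_self (ha.hasDerivAt hI h hz) n).congr_deriv ?_
  rw [shiftedConv_succ, add_sub_cancel_right, ← shiftedConv_smul_right _ _ (u z),
    ← shiftedConv_sub_right]
  rfl

theorem IsHankelSeq.two (ha : IsHankelSeq I u v a) (hI : IsOpen I) (h : CoupledPair I u v)
    (hz : z ∈ I) : a 2 z = (2 * z - 2 * u z * v z) * a 0 z + u z * (a 0 z * a 0 z) := by
  have h_one : ∀ y ∈ I, a 1 y = deriv v y := fun y hy => by
    rw [ha.succ 0 y hy, shiftedConv_zero, mul_zero, add_zero, deriv_eq_of_eqOn hI ha.zero hy]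
  rw [ha.succ 1 z hz, deriv_eq_of_eqOn hI h_one hz, h.deriv_deriv_right z hz, ha.zero z hz]
  simp [shiftedConv, ha.zero z hz]

theorem IsHankelSeq.secondOrderRec (ha : IsHankelSeq I u v a) (hI : IsOpen I)
    (h : CoupledPair I u v) (n : ℕ) :
    ∀ z ∈ I, SecondOrderRec (a · z) (2 * z - 2 * u z * v z) (u z) (deriv u z) n := by
  induction n using Nat.strong_induction_on with
  | _ n ih =>
    intro z hz
    rcases n with _ | n
    · simpa [SecondOrderRec, shiftedConv] using ha.two hI h hz
    have hu := hasDerivAt_of_contDiffOn hI h.contDiffOn_left hz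
    have hv := hasDerivAt_of_contDiffOn hI h.contDiffOn_right hz
    have hu' := hasDerivAt_deriv_of_contDiffOn hI h.contDiffOn_left hz
    have h_conv := ha.hasDerivAt_shiftedConv hI h hz
    have h_zero : v z = a 0 z := (ha.zero z hz).symm
    have h_one : deriv v z = a 1 z := by
      rw [ha.succ 0 z hz, shiftedConv_zero, mul_zero, add_zero, deriv_eq_of_eqOn hI ha.zero hz]
    have h_coeff : HasDerivAt (fun y => 2 * y - 2 * u y * v y)
        (2 - 2 * (deriv u z * a 0 z + u z * a 1 z)) z := by
      refine (((hasDerivAt_id z).const_mul 2).sub ((hu.const_mul 2).mul hv)).congr_deriv ?_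
      rw [h_zero, h_one]
      ring
    have h_lower : (n : 𝕜) * a (n - 1 + 1) z = n * a n z := by
      rcases n with _ | n
      · simp only [Nat.cast_zero, zero_mul]
      · rw [Nat.add_sub_cancel]
    have h_rhs := (((h_coeff.mul (ha.hasDerivAt hI h hz n)).add
      (((ha.hasDerivAt hI h hz (n - 1)).const_mul (n : 𝕜)).const_mul 2)).add
        (hu.mul (h_conv (n + 1)))).sub (hu'.mul (h_conv n))
    have h_eq := (ha.hasDerivAt hI h hz (n + 2)).unique <| h_rhs.congr_of_eventuallyEq <|
      Set.EqOn.eventuallyEq_of_mem (fun y hy => ih n n.lt_succ_self y hy) (hI.mem_nhds hz)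
    have h_cubic := shiftedConv_self_of_secondOrderRec (n := n) fun k hk => ih k (by lia) z hz
    rw [h.deriv_deriv_left z hz, h_zero] at h_eq
    rw [h_zero] at h_cubic
    rw [SecondOrderRec, h_zero]
    push_cast
    linear_combination h_eq + 2 * u z * h_cubic + 2 * h_lower

theorem IsHankelSeq.hasDerivAt_hankelMinor (ha : IsHankelSeq I u v a) (hI : IsOpen I)
    (h : CoupledPair I u v) (hz : z ∈ I) {n : ℕ} (f : Fin n → ℕ) :
    HasDerivAt (fun y => hankelMinor (a · y) f)
      (detVariation (hankelMatrix (a · z) f) (hankelMatrix (a · z) fun i => f i + 1) -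
        u z * detVariation (hankelMatrix (a · z) f)
          (hankelMatrix (shiftedConv (a · z) (a · z)) f)) z := by
  rw [← smul_eq_mul, ← map_smul, ← map_sub]
  refine hasDerivAt_det fun i j => (ha.hasDerivAt hI h hz (f i + j)).congr_deriv ?_
  simp only [hankelMatrix, Matrix.sub_apply, Matrix.smul_apply, of_apply, smul_eq_mul,
    add_right_comm]

theorem IsHankelSeq.hasDerivAt_hankelDet (ha : IsHankelSeq I u v a) (hI : IsOpen I)
    (h : CoupledPair I u v) (hz : z ∈ I) (n : ℕ) :
    HasDerivAt (fun y => hankelDet (a · y) (n + 1)) (hankelMinorSnoc (a · z) n (n + 1)) z := by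
  refine (ha.hasDerivAt_hankelMinor hI h hz Fin.val).congr_deriv ?_
  rw [detVariation_hankelMatrix_val_shift_one, detVariation_hankelMatrix_shiftedConv_val,
    mul_zero, sub_zero]

theorem IsHankelSeq.hasDerivAt_hankelMinorSnoc (ha : IsHankelSeq I u v a) (hI : IsOpen I)
    (h : CoupledPair I u v) (hz : z ∈ I) (m : ℕ) :
    HasDerivAt (fun y => hankelMinorSnoc (a · y) (m + 1) (m + 2))
      (hankelMinorSnoc (a · z) (m + 1) (m + 3) + hankelMinorSnocSnoc (a · z) m (m + 1) (m + 2) -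
        u z * (a 0 z * hankelDet (a · z) (m + 2))) z := by
  refine (ha.hasDerivAt_hankelMinor hI h hz _).congr_deriv ?_
  rw [detVariation_hankelMatrix_snoc_shift_one _ _ _ rfl,
    detVariation_hankelMatrix_shiftedConv_snoc _ _ _ rfl]

theorem IsHankelSeq.deriv_hankelDet (ha : IsHankelSeq I u v a) (hI : IsOpen I)
    (h : CoupledPair I u v) (hz : z ∈ I) (n : ℕ) :
    deriv (fun y => hankelDet (a · y) (n + 1)) z = hankelMinorSnoc (a · z) n (n + 1) :=
  (ha.hasDerivAt_hankelDet hI h hz n).deriv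

theorem IsHankelSeq.deriv_deriv_hankelDet (ha : IsHankelSeq I u v a) (hI : IsOpen I)
    (h : CoupledPair I u v) (hz : z ∈ I) (n : ℕ) :
    deriv (deriv fun y => hankelDet (a · y) (n + 1)) z =
      2 * hankelMinorSnoc (a · z) n (n + 2) -
        (n + 1) * (2 * z - 2 * u z * v z + 2 * (u z * a 0 z)) * hankelDet (a · z) (n + 1) := by
  rw [deriv_eq_of_eqOn hI (fun y hy => ha.deriv_hankelDet hI h hy n) hz]
  rcases n with _ | m
  · have h_one : HasDerivAt (fun y => hankelMinorSnoc (a · y) 0 1)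
        (a 2 z - u z * (a 0 z * a 0 z)) z := by
      simp only [hankelMinorSnoc_zero]
      simpa [shiftedConv] using ha.hasDerivAt hI h hz 1
    rw [h_one.deriv, ← hankelMinorSnoc_self, hankelMinorSnoc_zero, hankelMinorSnoc_zero]
    push_cast
    linear_combination -ha.two hI h hz
  · rw [(ha.hasDerivAt_hankelMinorSnoc hI h hz m).deriv]
    have h_trace := hankelMinorSnoc_sub_of_secondOrderRec
      (fun k => ha.secondOrderRec hI h k z hz) m
    push_cast
    linear_combination -h_trace

theorem IsHankelSeq.hirotaDSq_hankelDet (ha : IsHankelSeq I u v a) (hI : IsOpen I)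
    (h : CoupledPair I u v) (hz : z ∈ I) (n : ℕ) :
    hirotaDSq (fun y => hankelDet (a · y) (n + 1)) (fun y => hankelDet (a · y) n) z =
      (2 * z - 2 * u z * v z) * (hankelDet (a · z) (n + 1) * hankelDet (a · z) n) := by
  rcases n with _ | m
  · have h_deriv := ha.deriv_deriv_hankelDet hI h hz 0
    simp only [zero_add, ← hankelMinorSnoc_self, hankelMinorSnoc_zero] at h_deriv
    simp only [hirotaDSq, hankelDet_zero, deriv_const', zero_add, ← hankelMinorSnoc_self,
      hankelMinorSnoc_zero, h_deriv]
    push_cast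
    linear_combination 2 * ha.two hI h hz
  · rw [hirotaDSq, ha.deriv_deriv_hankelDet hI h hz, ha.deriv_deriv_hankelDet hI h hz,
      ha.deriv_hankelDet hI h hz, ha.deriv_hankelDet hI h hz]
    have h_plucker := hankelMinor_plucker (a · z) m m (m + 1) (m + 2)
    rw [hankelMinorSnocSnoc_self, hankelMinorSnocSnoc_self, hankelMinorSnoc_self,
      hankelMinorSnoc_self] at h_plucker
    have h_trace := hankelMinorSnoc_sub_of_secondOrderRec
      (fun k => ha.secondOrderRec hI h k z hz) m
    push_cast
    linear_combination 2 * h_plucker + 2 * hankelDet (a · z) (m + 1) * h_trace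

end CoupledSystem

section LinearProblem

variable {𝕜 : Type*} [NontriviallyNormedField 𝕜] {I : Set 𝕜}

theorem CoupledPair.of_wronskian_const {u v : 𝕜 → 𝕜} {β : 𝕜} (hI : IsOpen I)
    (hu : ContDiffOn 𝕜 ∞ u I) (hv : ContDiffOn 𝕜 ∞ v I) (hv_ne : ∀ z ∈ I, v z ≠ 0)
    (hv_eq : ∀ z ∈ I, deriv (deriv v) z = (2 * z - 2 * u z * v z) * v z)
    (h_wronskian : ∀ z ∈ I, u z * deriv v z - deriv u z * v z = β) : CoupledPair I u v where
  contDiffOn_left := hu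
  contDiffOn_right := hv
  deriv_deriv_right := hv_eq
  deriv_deriv_left z hz := by
    have h_deriv := ((hasDerivAt_of_contDiffOn hI hu hz).mul
      (hasDerivAt_deriv_of_contDiffOn hI hv hz)).sub
        ((hasDerivAt_deriv_of_contDiffOn hI hu hz).mul (hasDerivAt_of_contDiffOn hI hv hz))
    have h_zero := h_deriv.deriv.symm.trans
      ((deriv_eq_of_eqOn hI h_wronskian hz).trans (deriv_const z β))
    rw [hv_eq z hz] at h_zero
    apply mul_right_cancel₀ (hv_ne z hz)
    linear_combination -h_zero

theorem CoupledPair.of_linear_problem [NeZero (2 : 𝕜)] {α : 𝕜} {w ψ₀ : 𝕜 → 𝕜} (hI : IsOpen I)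
    (hw : ContDiffOn 𝕜 ∞ w I) (hψ₀ : ContDiffOn 𝕜 ∞ ψ₀ I) (hψ₀_ne : ∀ z ∈ I, ψ₀ z ≠ 0)
    (hL1 : ∀ z ∈ I, 2 * w z * deriv ψ₀ z - deriv w z * ψ₀ z - 4 * α * ψ₀ z = 0)
    (hL2 : ∀ z ∈ I, deriv (deriv ψ₀) z + (w z - 2 * z) * ψ₀ z = 0) :
    CoupledPair I (fun z => w z / (2 * ψ₀ z)) ψ₀ := by
  have hu : ContDiffOn 𝕜 ∞ (fun z => w z / (2 * ψ₀ z)) I :=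
    hw.div (contDiffOn_const.mul hψ₀) fun z hz => mul_ne_zero two_ne_zero (hψ₀_ne z hz)
  have hw_eq : ∀ z ∈ I, w z = 2 * (w z / (2 * ψ₀ z)) * ψ₀ z := fun z hz => by
    have := hψ₀_ne z hz
    field_simp
  refine .of_wronskian_const (β := 2 * α) hI hu hψ₀ hψ₀_ne (fun z hz => ?_) fun z hz => ?_
  · rw [← hw_eq z hz]
    linear_combination hL2 z hz
  · have hw_deriv := (deriv_eq_of_eqOn hI hw_eq hz).trans
      (((hasDerivAt_of_contDiffOn hI hu hz).const_mul 2).mul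
        (hasDerivAt_of_contDiffOn hI hψ₀ hz)).deriv
    have h_L1 := hL1 z hz
    rw [hw_deriv] at h_L1
    nth_rw 1 [hw_eq z hz] at h_L1
    apply mul_left_cancel₀ (mul_ne_zero two_ne_zero (hψ₀_ne z hz))
    linear_combination h_L1

end LinearProblem

section BilateralSequence

variable {R : Type*} [CommRing R]

/-- The sequence `τ_N` over the integers: the Hankel determinant of size `N` of `a` for `N ≥ 0`,
and of size `-N` of `b` for `N < 0`. -/
def bilateralHankelDet (a b : ℕ → R) : ℤ → R
  | .ofNat n => hankelDet a n
  | .negSucc n => hankelDet b (n + 1)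

theorem bilateralHankelDet_natCast (a b : ℕ → R) (n : ℕ) :
    bilateralHankelDet a b n = hankelDet a n :=
  rfl

theorem bilateralHankelDet_neg_natCast (a b : ℕ → R) (n : ℕ) :
    bilateralHankelDet a b (-n) = hankelDet b n := by
  rcases n with _ | n
  · exact (hankelDet_zero a).trans (hankelDet_zero b).symm
  · rfl

theorem hankelTau_eq_bilateralHankelDet (ψ φ : ℕ → ℝ → ℝ) (N : ℤ) :
    hankelTau ψ φ N = fun z => bilateralHankelDet (ψ · z) (φ · z) N := by
  rcases N with n | n <;> rfl

end BilateralSequence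

end P34Hankel

open P34Hankel in
theorem painleve34_bilinear_Dsq_general {𝕜 : Type*} [NontriviallyNormedField 𝕜] [NeZero (2 : 𝕜)]
    {I : Set 𝕜} (hI : IsOpen I) {α : 𝕜} {w ψ₀ : 𝕜 → 𝕜} (hw : ContDiffOn 𝕜 (⊤ : ℕ∞) w I)
    (hψ₀ : ContDiffOn 𝕜 (⊤ : ℕ∞) ψ₀ I) (hψ₀_ne : ∀ z ∈ I, ψ₀ z ≠ 0)
    (hL1 : ∀ z ∈ I, 2 * w z * deriv ψ₀ z - deriv w z * ψ₀ z - 4 * α * ψ₀ z = 0)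
    (hL2 : ∀ z ∈ I, deriv (deriv ψ₀) z + (w z - 2 * z) * ψ₀ z = 0) {ψ φ : ℕ → 𝕜 → 𝕜}
    (hψ : IsHankelSeq I (fun z => w z / (2 * ψ₀ z)) ψ₀ ψ)
    (hφ : IsHankelSeq I ψ₀ (fun z => w z / (2 * ψ₀ z)) φ) (N : ℤ) {z : 𝕜} (hz : z ∈ I) :
    hirotaDSq (fun y => bilateralHankelDet (ψ · y) (φ · y) (N + 1))
        (fun y => bilateralHankelDet (ψ · y) (φ · y) N) z +
      (w z - 2 * z) * (bilateralHankelDet (ψ · z) (φ · z) (N + 1) *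
        bilateralHankelDet (ψ · z) (φ · z) N) = 0 := by
  have h_pair := CoupledPair.of_linear_problem hI hw hψ₀ hψ₀_ne hL1 hL2
  have hw_eq : 2 * (w z / (2 * ψ₀ z)) * ψ₀ z = w z := by
    have := hψ₀_ne z hz
    field_simp
  obtain ⟨n, rfl | rfl⟩ : ∃ n : ℕ, N = n ∨ N = -((n + 1 : ℕ) : ℤ) := by
    rcases N with n | n
    exacts [⟨n, .inl rfl⟩, ⟨n, .inr rfl⟩]
  · simp only [← Nat.cast_succ, bilateralHankelDet_natCast]
    rw [Nat.succ_eq_add_one, hψ.hirotaDSq_hankelDet hI h_pair hz, hw_eq]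
    ring
  · have h_succ : -((n + 1 : ℕ) : ℤ) + 1 = -(n : ℤ) := by lia
    simp only [h_succ, bilateralHankelDet_neg_natCast]
    rw [hirotaDSq_comm, hφ.hirotaDSq_hankelDet hI h_pair.symm hz, mul_right_comm 2, hw_eq]
    ring

/-- The bilinear equation `(D_z² + w - 2z) τ_{N+1}·τ_N = 0`, where
`D_z² g·f = g''f - 2g'f' + gf''`. -/
theorem painleve34_bilinear_Dsq
    (I : Set ℝ) (hIopen : IsOpen I) (hIconn : I.OrdConnected)
    (α : ℝ) (w ψ0 : ℝ → ℝ)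
    (hw_smooth : ContDiffOn ℝ (⊤ : ℕ∞) w I)
    (hw_P34 : ∀ z ∈ I,
      2 * w z * deriv (deriv w) z - (deriv w z) ^ 2 + 4 * (w z) ^ 3
        - 8 * z * (w z) ^ 2 + 16 * α ^ 2 = 0)
    (hψ0_smooth : ContDiffOn ℝ (⊤ : ℕ∞) ψ0 I)
    (hψ0_ne : ∀ z ∈ I, ψ0 z ≠ 0)
    (hL1 : ∀ z ∈ I, 2 * w z * deriv ψ0 z - deriv w z * ψ0 z - 4 * α * ψ0 z = 0)
    (hL2 : ∀ z ∈ I, deriv (deriv ψ0) z + (w z - 2 * z) * ψ0 z = 0)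
    (ψ φ : ℕ → ℝ → ℝ)
    (hψ_zero : ψ 0 = ψ0)
    (hφ_zero : ∀ z ∈ I, φ 0 z = w z / (2 * ψ0 z))
    (hψ_rec : ∀ n : ℕ, ∀ z ∈ I, ψ (n + 1) z =
      deriv (ψ n) z + (w z / (2 * ψ0 z)) *
        ∑ k ∈ Finset.range n, ψ k z * ψ (n - 1 - k) z)
    (hφ_rec : ∀ n : ℕ, ∀ z ∈ I, φ (n + 1) z =
      deriv (φ n) z + ψ0 z *
        ∑ k ∈ Finset.range n, φ k z * φ (n - 1 - k) z) :
    ∀ N : ℤ, ∀ z ∈ I,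
      (deriv (deriv (hankelTau ψ φ (N + 1))) z * hankelTau ψ φ N z
        - 2 * deriv (hankelTau ψ φ (N + 1)) z * deriv (hankelTau ψ φ N) z
        + hankelTau ψ φ (N + 1) z * deriv (deriv (hankelTau ψ φ N)) z)
      + (w z - 2 * z) * (hankelTau ψ φ (N + 1) z * hankelTau ψ φ N z) = 0 := by
  intro N z hz
  simpa only [P34Hankel.hankelTau_eq_bilateralHankelDet, P34Hankel.hirotaDSq] using
    painleve34_bilinear_Dsq_general hIopen hw_smooth hψ0_smooth hψ0_ne hL1 hL2
      ⟨fun y _ => congrFun hψ_zero y, hψ_rec⟩ ⟨hφ_zero, hφ_rec⟩ N hz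
end
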